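/- Composition operators on 𝒟_* separate Schatten classes: for every p₁ ∈ (0, ∞), (i) there exists a Schur function φ with φ(0) = 0 such that C_φ ∈ S_p(𝒟_*) for every p > p₁ but C_φ ∉ S_{p₁}(𝒟_*); and (ii) there exists a Schur function φ with φ(0) = 0 such that C_φ ∈ S_{p₁}(𝒟_*) but C_φ ∉ S_p(𝒟_*) for every p with 0 < p < p₁. In particular, for every 0 < p₁ < p₂ < ∞ there exists a Schur function φ with C_φ ∈ S_{p₂}(𝒟_*) \ S_{p₁}(𝒟_*). -/

import Mathlib

/-!
The symbols are *cusp maps*. In the coordinate `z = ψ(s) = 1 - e^{-s}`, the disc becomes a domain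
`dom` which is asymptotically a half-strip, and `φ` is defined by `φ ∘ ψ = ψ ∘ F`, where `F` is
holomorphic with `F(0) = 0` and `F'(s) ≈ γ(Re s)` for a small decreasing function `γ > 0`
(`CuspExp`, `cuspMap`). The image of `φ` then has at the point `1` a cusp of relative width
`γ(t)` at distance `e^{-F(t)}`.

Approximation numbers are estimated in the Hilbert space `𝒟_*`, realised in `L²(D, dA)` by
`f ↦ f'`.

* Upper bound (`CuspExp.approx_le`). The part of the Dirichlet integral of `f ∘ φ` over `Re s ≥ T`
  is `O(γ(T)) ‖f‖²`, by the sub-mean value property on discs inside the unit disc (`tail`). The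
  part of the image of `φ` with `Re s < T` is covered by `O(F(T) + 1)` pseudohyperbolic discs. If
  `f` is orthogonal to the `m` functions representing the first Taylor coefficients of
  `f ∘ b_{-r}` at each of their centres `r`, its derivative there is smaller by a factor `4^{-m}`
  (`local_est`, `head`). Hence `a_n` is at most of order `√γ(T)` for `n` of order `m F(T)`, where
  `m` is of order `log T`.
* Lower bound (`CuspExp.le_approx`). The disc automorphisms `b_r` with zeros at the points
  `1 - e^{-F(t_k)}`, for `n` points `t_k` equally spaced in `[T, 2T]`, are almost orthonormal once
  `F(t_{k+1}) - F(t_k)` exceeds a multiple of `log T` (`gram_bound`). On a box of width of order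
  `1 / γ(T)` around `t_k` the `k`-th function dominates (`point_lower`), so `C_φ` is bounded below
  by a multiple of `√γ(T)` on their span when `γ(2T)` is comparable to `γ(T)`.

For `F(s) = G(A + s) - G(A)` with `G(s) = s^a (log s)^c`, `a = p₁ / (p₁ + 2)`, and `A + T = e^j`,
the estimates give `√γ(T) ≈ (e^{(a-1)j} j^c)^{1/2}` for indices between `e^{aj} j^{c-1}` and
`e^{aj} j^{c+1}` (`exists_map`). The exponential factor in `n a_n^p` cancels exactly for `p = p₁`,
so `p₁` is the critical exponent whatever `c` is. At `p = p₁` the factors `j^{c ∓ 1 + c p₁ / 2}`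
decide: for `c = 1` the operator is not in `S_{p₁}` (`exists_open`), and for `c = -2` it is
(`exists_closed`).
-/

open Complex MeasureTheory Metric Set Filter Topology
open scoped ENNReal NNReal

noncomputable section

/-- Normalized area measure `dA = dx dy / π` on `ℂ`. -/
def nA : Measure ℂ := (ENNReal.ofReal Real.pi)⁻¹ • volume

/-- The open unit disk `D ⊆ ℂ`. -/
def uD : Set ℂ := Metric.ball (0 : ℂ) 1

/-- A Schur function: an analytic self-map of the open unit disk. -/
def IsSchur (φ : ℂ → ℂ) : Prop :=
  DifferentiableOn ℂ φ uD ∧ Set.MapsTo φ uD uD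

/-- Squared norm of `f` in the weighted Dirichlet space `𝒟_α`, with value in `[0,∞]`:
`‖f‖_α² = |f(0)|² + (α+1) ∫_D |f′(z)|² (1−|z|²)^α dA(z)`. -/
def eDNormSqW (α : ℝ) (f : ℂ → ℂ) : ℝ≥0∞ :=
  ENNReal.ofReal (‖f 0‖ ^ 2) +
    ∫⁻ z in uD, ENNReal.ofReal ((α + 1) * ‖deriv f z‖ ^ 2 * (1 - ‖z‖ ^ 2) ^ α) ∂nA

/-- Squared Dirichlet norm: `‖f‖² = |f(0)|² + ∫_D |f′(z)|² dA(z)`. -/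
def eDNormSq (f : ℂ → ℂ) : ℝ≥0∞ := eDNormSqW 0 f

/-- Membership in the weighted Dirichlet space `𝒟_α`. -/
def MemDW (α : ℝ) (f : ℂ → ℂ) : Prop :=
  DifferentiableOn ℂ f uD ∧ eDNormSqW α f < ⊤

/-- Membership in `𝒟_{α,*}`. -/
def MemDWStar (α : ℝ) (f : ℂ → ℂ) : Prop := MemDW α f ∧ f 0 = 0

/-- Membership in the Dirichlet space `𝒟`. -/
def MemD (f : ℂ → ℂ) : Prop := MemDW 0 f

/-- Membership in `𝒟_*`. -/
def MemDStar (f : ℂ → ℂ) : Prop := MemDWStar 0 f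

/-- The composition operator `C_φ f = f ∘ φ`. -/
def compOp (φ : ℂ → ℂ) : (ℂ → ℂ) → ℂ → ℂ := fun f z => f (φ z)

/-- Operator norm of `T` with respect to the space `{f | Mem f}` with squared norm `NSq`:
the least `C` such that `‖T f‖² ≤ C² ‖f‖²` for all `f` in the space (`⊤` if none). -/
def eOpNorm (Mem : (ℂ → ℂ) → Prop) (NSq : (ℂ → ℂ) → ℝ≥0∞)
    (T : (ℂ → ℂ) → ℂ → ℂ) : ℝ≥0∞ :=
  sInf {C : ℝ≥0∞ | ∀ f, Mem f → NSq (T f) ≤ C ^ 2 * NSq f}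

/-- The `n`-th approximation number `a_n(T) = inf {‖T − R‖ : rank R < n}`. -/
def eApproxNum (Mem : (ℂ → ℂ) → Prop) (NSq : (ℂ → ℂ) → ℝ≥0∞)
    (T : (ℂ → ℂ) → ℂ → ℂ) (n : ℕ) : ℝ≥0∞ :=
  sInf {c : ℝ≥0∞ | ∃ R : (ℂ → ℂ) →ₗ[ℂ] (ℂ → ℂ),
    Module.rank ℂ (LinearMap.range R) < (n : Cardinal) ∧
    c = eOpNorm Mem NSq (fun f z => T f z - R f z)}

/-- `T` is a bounded operator on the space `{f | Mem f}` with squared norm `NSq`. -/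
def IsBoundedOpOn (Mem : (ℂ → ℂ) → Prop) (NSq : (ℂ → ℂ) → ℝ≥0∞)
    (T : (ℂ → ℂ) → ℂ → ℂ) : Prop :=
  (∀ f, Mem f → Mem (T f)) ∧ eOpNorm Mem NSq T ≠ ⊤

/-- `T` is a compact operator on the space `{f | Mem f}`: it is bounded and its
approximation numbers tend to `0` (the standard characterization of compactness
for operators on a Hilbert space). -/
def IsCompactOpOn (Mem : (ℂ → ℂ) → Prop) (NSq : (ℂ → ℂ) → ℝ≥0∞)
    (T : (ℂ → ℂ) → ℂ → ℂ) : Prop :=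
  IsBoundedOpOn Mem NSq T ∧
    Filter.Tendsto (fun n => eApproxNum Mem NSq T n) Filter.atTop (𝓝 0)

/-- `T` belongs to the Schatten class `S_p` of the space `{f | Mem f}`:
`Σ_{n≥1} a_n(T)^p < ∞`. -/
def MemSchattenOn (Mem : (ℂ → ℂ) → Prop) (NSq : (ℂ → ℂ) → ℝ≥0∞)
    (T : (ℂ → ℂ) → ℂ → ℂ) (p : ℝ) : Prop :=
  IsBoundedOpOn Mem NSq T ∧
    ∑' n : ℕ, (eApproxNum Mem NSq T (n + 1)) ^ p ≠ ⊤

/-- `C_φ` belongs to the Schatten class `S_p(𝒟_*)`. -/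
def MemSchattenD (p : ℝ) (φ : ℂ → ℂ) : Prop :=
  MemSchattenOn MemDStar eDNormSq (compOp φ) p

/-- `C_φ` is a Hilbert–Schmidt operator on `𝒟_*`: it is bounded and
`Σ_n ‖C_φ e_n‖² < ∞` for the orthonormal basis `e_n(z) = zⁿ/√n`, `n ≥ 1`, of `𝒟_*`
(equivalently, for every orthonormal basis). -/
def HilbertSchmidtOnDStar (φ : ℂ → ℂ) : Prop :=
  IsBoundedOpOn MemDStar eDNormSq (compOp φ) ∧
    ∑' n : ℕ, eDNormSq (fun z => φ z ^ (n + 1) / (Real.sqrt (n + 1) : ℂ)) ≠ ⊤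

/-- Squared Hardy norm `‖f‖² = sup_{0≤r<1} (1/2π) ∫_0^{2π} |f(r e^{it})|² dt`. -/
def eHardyNormSq (f : ℂ → ℂ) : ℝ≥0∞ :=
  ⨆ r : Set.Ico (0 : ℝ) 1,
    (∫⁻ t in Set.Ioc 0 (2 * Real.pi),
      ENNReal.ofReal (‖f ((r : ℝ) * Complex.exp (t * Complex.I))‖ ^ 2)) /
        ENNReal.ofReal (2 * Real.pi)

/-- Membership in the Hardy space `H²`. -/
def MemHardy (f : ℂ → ℂ) : Prop := DifferentiableOn ℂ f uD ∧ eHardyNormSq f < ⊤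

/-- Squared Bergman norm `‖f‖² = ∫_D |f|² dA`. -/
def eBergNormSq (f : ℂ → ℂ) : ℝ≥0∞ := ∫⁻ z in uD, ENNReal.ofReal (‖f z‖ ^ 2) ∂nA

/-- Membership in the Bergman space `𝔅²`. -/
def MemBerg (f : ℂ → ℂ) : Prop := DifferentiableOn ℂ f uD ∧ eBergNormSq f < ⊤

/-- The logarithmic energy `I_μ = ∬ log(e/|z−w|) dμ(z) dμ(w)` of a measure on the circle. -/
def eEnergy (μ : Measure ℂ) : ℝ≥0∞ :=
  ∫⁻ z, ∫⁻ w, ENNReal.ofReal (Real.log (Real.exp 1 / dist z w)) ∂μ ∂μ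

/-- A Borel set `E` (contained in the unit circle) has logarithmic capacity zero iff
`I_μ = ∞` for every Borel probability measure `μ` with compact support contained in `E`. -/
def HasLogCapacityZero (E : Set ℂ) : Prop :=
  ∀ μ : Measure ℂ, IsProbabilityMeasure μ →
    (∃ K, IsCompact K ∧ K ⊆ E ∧ μ Kᶜ = 0) → eEnergy μ = ⊤

/-- The weighted Nevanlinna counting function `N_{φ,α}(w) = Σ_{z∈D, φ(z)=w} (1−|z|²)^α`. -/
def nevanlinnaE (φ : ℂ → ℂ) (α : ℝ) (w : ℂ) : ℝ≥0∞ :=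
  ∑' z : {z : ℂ // z ∈ uD ∧ φ z = w}, ENNReal.ofReal ((1 - ‖(z : ℂ)‖ ^ 2) ^ α)

/-- The Carleson window `W(ξ,h)`. -/
def carlesonW (ξ : ℂ) (h : ℝ) : Set ℂ :=
  {w ∈ uD | 1 - ‖w‖ ≤ h ∧ |Complex.arg (w * (starRingEnd ℂ) ξ)| ≤ Real.pi * h}

/-- Argument normalized to lie in `[0, 2π)`. -/
def argNN (z : ℂ) : ℝ :=
  if 0 ≤ Complex.arg z then Complex.arg z else Complex.arg z + 2 * Real.pi

/-- The Hastings–Luecking window `R_{n,j}`. -/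
def HLwindow (n j : ℕ) : Set ℂ :=
  {z ∈ uD | 1 - ((2 : ℝ) ^ n)⁻¹ ≤ ‖z‖ ∧ ‖z‖ < 1 - ((2 : ℝ) ^ (n + 1))⁻¹ ∧
    2 * j * Real.pi / 2 ^ n ≤ argNN z ∧ argNN z < 2 * (j + 1) * Real.pi / 2 ^ n}

/-- `g` is an a.e. radial limit function of `φ`:
for a.e. `t`, `φ(r e^{it}) → g(t)` as `r → 1⁻`. -/
def IsRadialLimit (φ : ℂ → ℂ) (g : ℝ → ℂ) : Prop :=
  ∀ᵐ t : ℝ, Filter.Tendsto (fun r : ℝ => φ ((r : ℂ) * Complex.exp (t * Complex.I)))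
    (𝓝[<] (1 : ℝ)) (𝓝 (g t))

/-! ### Change of variables and area integrals of holomorphic functions -/

/-- Multiplication by `c`, as a real-linear map of the plane, has determinant `|c|²`. -/
lemma det_mul_complex (c : ℂ) :
    ((ContinuousLinearMap.toSpanSingleton ℂ c).restrictScalars ℝ).det = ‖c‖ ^ 2 := by
  rw [ContinuousLinearMap.det]
  have : (((ContinuousLinearMap.toSpanSingleton ℂ c).restrictScalars ℝ : ℂ →L[ℝ] ℂ)
      : ℂ →ₗ[ℝ] ℂ) = LinearMap.restrictScalars ℝ
        ((ContinuousLinearMap.toSpanSingleton ℂ c : ℂ →L[ℂ] ℂ) : ℂ →ₗ[ℂ] ℂ) := rfl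
  rw [this, LinearMap.det_restrictScalars, Algebra.norm_complex_eq]
  simp [Complex.normSq_eq_norm_sq]

/-- The conformal change of variables: the Jacobian of a holomorphic map `h` is `|h'|²`. -/
lemma lintegral_image_holo {S : Set ℂ} (hS : MeasurableSet S) {h h' : ℂ → ℂ}
    (hd : ∀ z ∈ S, HasDerivAt h (h' z) z) (hi : InjOn h S) (H : ℂ → ℝ≥0∞) :
    ∫⁻ w in h '' S, H w = ∫⁻ z in S, ENNReal.ofReal (‖h' z‖ ^ 2) * H (h z) := by
  have := lintegral_image_eq_lintegral_abs_det_fderiv_mul volume hS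
    (f := h) (f' := fun z => ((ContinuousLinearMap.toSpanSingleton ℂ (h' z)).restrictScalars ℝ))
    (fun z hz => ((hd z hz).hasFDerivAt.restrictScalars ℝ).hasFDerivWithinAt) hi H
  rw [this]
  congr 1
  ext z
  congr 2
  rw [det_mul_complex, abs_of_nonneg (by positivity)]

lemma lintegral_nA (S : Set ℂ) (H : ℂ → ℝ≥0∞) :
    ∫⁻ z in S, H z ∂nA = (ENNReal.ofReal Real.pi)⁻¹ * ∫⁻ z in S, H z := by
  rw [nA, Measure.restrict_smul, lintegral_smul_measure, smul_eq_mul]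

lemma lintegral_image_holo_nA {S : Set ℂ} (hS : MeasurableSet S) {h h' : ℂ → ℂ}
    (hd : ∀ z ∈ S, HasDerivAt h (h' z) z) (hi : InjOn h S) (H : ℂ → ℝ≥0∞) :
    ∫⁻ w in h '' S, H w ∂nA = ∫⁻ z in S, ENNReal.ofReal (‖h' z‖ ^ 2) * H (h z) ∂nA := by
  rw [lintegral_nA, lintegral_nA, lintegral_image_holo hS hd hi]

lemma circle_avg_le {g : ℂ → ℂ} {w : ℂ} {R : ℝ} (hg : DifferentiableOn ℂ g (ball w R))
    {ρ : ℝ} (h0 : 0 < ρ) (hρ : ρ < R) :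
    ENNReal.ofReal (‖g w‖ ^ 2) * ENNReal.ofReal (2 * Real.pi) ≤
      ∫⁻ θ in Ioo (-Real.pi) Real.pi,
        ENNReal.ofReal (‖g (w + ρ * Complex.exp (θ * I))‖ ^ 2) := by
  have hsub : closedBall w ρ ⊆ ball w R := closedBall_subset_ball hρ
  have hd : DiffContOnCl ℂ (fun z => g z ^ 2) (ball w |ρ|) := by
    rw [abs_of_pos h0]
    exact DifferentiableOn.diffContOnCl
      (((hg.pow 2).mono hsub).mono closure_ball_subset_closedBall)
  have hav := hd.circleAverage
  rw [Real.circleAverage_def] at hav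
  have hcont : Continuous fun θ : ℝ => g (circleMap w ρ θ) := by
    refine ContinuousOn.comp_continuous (hg.continuousOn.mono hsub) (continuous_circleMap w ρ) ?_
    intro θ
    exact circleMap_mem_closedBall w h0.le θ
  have hper : Function.Periodic (fun θ : ℝ => ‖g (circleMap w ρ θ)‖ ^ 2) (2 * Real.pi) := by
    intro θ
    simp only [periodic_circleMap w ρ θ]
  have h1 : ‖g w‖ ^ 2 * (2 * Real.pi) ≤ ∫ θ in (0)..(2 * Real.pi), ‖g (circleMap w ρ θ)‖ ^ 2 := by
    have h2 : ‖∫ θ in (0)..(2 * Real.pi), g (circleMap w ρ θ) ^ 2‖ ≤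
        ∫ θ in (0)..(2 * Real.pi), ‖g (circleMap w ρ θ)‖ ^ 2 := by
      refine (intervalIntegral.norm_integral_le_integral_norm (by positivity)).trans_eq ?_
      simp
    have h3 : g w ^ 2 * (2 * Real.pi) = ∫ θ in (0)..(2 * Real.pi), g (circleMap w ρ θ) ^ 2 := by
      rw [← hav]
      have : (Real.pi : ℂ) ≠ 0 := by exact_mod_cast Real.pi_ne_zero
      simp only [Complex.real_smul]
      push_cast
      field_simp
    rw [← h3] at h2
    simpa [abs_of_pos Real.pi_pos] using h2
  have h4 : ∫ θ in (0)..(2 * Real.pi), ‖g (circleMap w ρ θ)‖ ^ 2 =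
      ∫ θ in Ioo (-Real.pi) Real.pi, ‖g (circleMap w ρ θ)‖ ^ 2 := by
    have := hper.intervalIntegral_add_eq 0 (-Real.pi)
    rw [zero_add] at this
    rw [this, intervalIntegral.integral_of_le (by linarith [Real.pi_pos]),
      integral_Ioc_eq_integral_Ioo]
    congr 2
    ring_nf
  rw [h4] at h1
  rw [← ENNReal.ofReal_mul (by positivity)]
  refine (ENNReal.ofReal_le_ofReal h1).trans ?_
  rw [ofReal_integral_eq_lintegral_ofReal]
  · exact le_of_eq rfl
  · have : IntegrableOn (fun θ : ℝ => ‖g (circleMap w ρ θ)‖ ^ 2) (Icc (-Real.pi) Real.pi) :=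
      (hcont.norm.pow 2).continuousOn.integrableOn_Icc
    exact this.mono_set Ioo_subset_Icc_self
  · exact Filter.Eventually.of_forall fun θ => by positivity

/-- The area integral over a disc in polar coordinates around its centre. -/
lemma lintegral_ball_polar (w : ℂ) (R : ℝ) (H : ℂ → ℝ≥0∞)
    (hH : ContinuousOn H (ball w R)) :
    ∫⁻ z in ball w R, H z = ∫⁻ ρ in Ioo 0 R, ∫⁻ θ in Ioo (-Real.pi) Real.pi,
      ENNReal.ofReal ρ * H (w + ρ * Complex.exp (θ * I)) := by
  have e0 : ∫⁻ z in ball w R, H z = ∫⁻ z, (ball (0 : ℂ) R).indicator (fun z => H (w + z)) z := by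
    rw [← lintegral_indicator measurableSet_ball,
      ← lintegral_add_left_eq_self _ w]
    congr 1
    ext z
    simp [indicator, mem_ball]
  have hpe : ∀ p : ℝ × ℝ, Complex.polarCoord.symm p = p.1 * Complex.exp (p.2 * I) := by
    intro p
    rw [Complex.polarCoord_symm_apply, Complex.exp_mul_I]
    push_cast
    rfl
  rw [e0, ← Complex.lintegral_comp_polarCoord_symm]
  have e1 : ∫⁻ p in polarCoord.target, ENNReal.ofReal p.1 •
      (ball (0 : ℂ) R).indicator (fun z => H (w + z)) (Complex.polarCoord.symm p) =
      ∫⁻ p in Ioo 0 R ×ˢ Ioo (-Real.pi) Real.pi,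
        ENNReal.ofReal p.1 * H (w + p.1 * Complex.exp (p.2 * I)) := by
    rw [polarCoord_target, ← lintegral_indicator (measurableSet_Ioi.prod measurableSet_Ioo),
      ← lintegral_indicator (measurableSet_Ioo.prod measurableSet_Ioo)]
    congr 1
    ext p
    simp only [indicator, hpe, mem_prod, mem_Ioi, mem_Ioo, mem_ball_zero_iff, norm_mul,
      Complex.norm_exp_ofReal_mul_I, mul_one, Complex.norm_real, Real.norm_eq_abs]
    by_cases h1 : 0 < p.1
    · simp only [h1, true_and, abs_of_pos h1]
      by_cases h2 : p.1 < R <;> simp [h2]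
    · simp [h1]
  rw [e1, Measure.volume_eq_prod]
  have hc : ContinuousOn (fun p : ℝ × ℝ => H (w + p.1 * Complex.exp (p.2 * I)))
      (Ioo 0 R ×ˢ Ioo (-Real.pi) Real.pi) := by
    refine hH.comp (by fun_prop) ?_
    rintro ⟨ρ, θ⟩ ⟨h1, h2⟩
    simp [mem_ball, dist_eq_norm, Complex.norm_exp_ofReal_mul_I, abs_of_pos h1.1, h1.2]
  rw [setLIntegral_prod]
  refine AEMeasurable.mul (by fun_prop) ?_
  exact hc.aemeasurable (measurableSet_Ioo.prod measurableSet_Ioo)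

/-- Sub-mean value property of `|g|²` on discs, with respect to normalized area. -/
lemma subMean {g : ℂ → ℂ} {w : ℂ} {R : ℝ} (hR : 0 < R) (hg : DifferentiableOn ℂ g (ball w R)) :
    ENNReal.ofReal (‖g w‖ ^ 2) * ENNReal.ofReal (R ^ 2) ≤
      ∫⁻ z in ball w R, ENNReal.ofReal (‖g z‖ ^ 2) ∂nA := by
  rw [lintegral_nA, lintegral_ball_polar w R (fun z => ENNReal.ofReal (‖g z‖ ^ 2))
    (ENNReal.continuous_ofReal.comp_continuousOn (hg.continuousOn.norm.pow 2))]
  have h1 : ∫⁻ ρ in Ioo 0 R, ENNReal.ofReal ρ *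
      (ENNReal.ofReal (‖g w‖ ^ 2) * ENNReal.ofReal (2 * Real.pi)) ≤
      ∫⁻ ρ in Ioo 0 R, ∫⁻ θ in Ioo (-Real.pi) Real.pi,
      ENNReal.ofReal ρ * ENNReal.ofReal (‖g (w + ρ * Complex.exp (θ * I))‖ ^ 2) := by
    refine setLIntegral_mono' measurableSet_Ioo fun ρ hρ => ?_
    rw [lintegral_const_mul' _ _ ENNReal.ofReal_ne_top]
    gcongr
    exact circle_avg_le hg hρ.1 hρ.2
  refine le_trans ?_ (mul_le_mul_right h1 _)
  rw [lintegral_mul_const' _ _ (ENNReal.mul_ne_top ENNReal.ofReal_ne_top ENNReal.ofReal_ne_top)]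
  have h2 : ∫⁻ ρ in Ioo 0 R, ENNReal.ofReal ρ = ENNReal.ofReal (R ^ 2 / 2) := by
    rw [← ofReal_integral_eq_lintegral_ofReal]
    · rw [← integral_Ioc_eq_integral_Ioo, ← intervalIntegral.integral_of_le hR.le, integral_id]
      simp
    · exact (continuous_id.integrableOn_Icc).mono_set Ioo_subset_Icc_self
    · exact (ae_restrict_mem measurableSet_Ioo).mono fun x hx => hx.1.le
  rw [h2, ← ENNReal.ofReal_inv_of_pos Real.pi_pos, ← ENNReal.ofReal_mul (by positivity),
    ← ENNReal.ofReal_mul (by positivity), ← ENNReal.ofReal_mul (by positivity),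
    ← ENNReal.ofReal_mul (by positivity)]
  apply ENNReal.ofReal_le_ofReal
  have := Real.pi_ne_zero
  apply le_of_eq
  field_simp

lemma uD_measurable : MeasurableSet uD := measurableSet_ball

lemma uD_isOpen : IsOpen uD := isOpen_ball

lemma mem_uD {z : ℂ} : z ∈ uD ↔ ‖z‖ < 1 := mem_ball_zero_iff

/-- The Cauchy formula for Taylor coefficients, written as an angular integral. -/
lemma circle_coeff {G : ℂ → ℂ} (hG : DifferentiableOn ℂ G uD) (j : ℕ) {ρ : ℝ} (h0 : 0 < ρ)
    (h1 : ρ < 1) :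
    ∫ θ in Ioo (-Real.pi) Real.pi, G (ρ * Complex.exp (θ * I)) *
      (starRingEnd ℂ) ((ρ * Complex.exp (θ * I)) ^ j) =
      (ρ : ℂ) ^ (2 * j) * (2 * Real.pi) * (iteratedDeriv j G 0 / j.factorial) := by
  have hsub : closedBall (0 : ℂ) ρ ⊆ uD := closedBall_subset_ball h1
  have hc := (hG.mono hsub).circleIntegral_one_div_sub_center_pow_smul h0 j
  have hper : Function.Periodic (fun θ : ℝ => G (circleMap 0 ρ θ) *
      (starRingEnd ℂ) (circleMap 0 ρ θ ^ j)) (2 * Real.pi) := by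
    intro θ
    simp only [periodic_circleMap 0 ρ θ]
  have e1 := hper.intervalIntegral_add_eq 0 (-Real.pi)
  rw [zero_add, intervalIntegral.integral_of_le (a := -Real.pi) (by linarith [Real.pi_pos]),
      integral_Ioc_eq_integral_Ioo, show -Real.pi + 2 * Real.pi = Real.pi by ring] at e1
  have e2 : ∀ θ : ℝ, (ρ : ℂ) * Complex.exp (θ * I) = circleMap 0 ρ θ := by
    intro θ; simp [circleMap]
  simp_rw [e2]
  rw [← e1]
  have hρ : (ρ : ℂ) ≠ 0 := by exact_mod_cast h0.ne'
  have e3 : ∫ θ in (0)..(2 * Real.pi), G (circleMap 0 ρ θ) * (starRingEnd ℂ) (circleMap 0 ρ θ ^ j) =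
      (ρ : ℂ) ^ (2 * j) * I⁻¹ *
        ∮ z in C(0, ρ), (1 / (z - 0) ^ (j + 1)) • G z := by
    rw [circleIntegral, ← intervalIntegral.integral_const_mul]
    congr 1
    ext θ
    have hz : circleMap 0 ρ θ ≠ 0 := by simpa using circleMap_ne_center (c := 0) (θ := θ) h0.ne'
    have hzz : (starRingEnd ℂ) (circleMap 0 ρ θ) = ρ ^ 2 / circleMap 0 ρ θ := by
      rw [eq_div_iff hz, mul_comm, Complex.mul_conj, Complex.normSq_eq_norm_sq]
      simp
    simp only [deriv_circleMap, smul_eq_mul, sub_zero, map_pow, hzz]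
    rw [div_pow, ← pow_mul]
    field_simp
    ring
  rw [e3, hc, smul_eq_mul]
  field_simp

/-- The monomials are orthogonal on the disc: pairing a square integrable holomorphic function
with `u ^ j` extracts its `j`-th Taylor coefficient. -/
lemma disc_coeff {G : ℂ → ℂ} (hG : DifferentiableOn ℂ G uD) (j : ℕ)
    (hfin : ∫⁻ u in uD, ENNReal.ofReal ‖G u * (starRingEnd ℂ) (u ^ j)‖ < ⊤) :
    ∫ u in uD, G u * (starRingEnd ℂ) (u ^ j) ∂nA =
      iteratedDeriv j G 0 / (j.factorial * (j + 1)) := by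
  set H : ℂ → ℂ := fun u => G u * (starRingEnd ℂ) (u ^ j) with hH
  have hHc : ContinuousOn H uD := by
    refine hG.continuousOn.mul ?_
    exact (Complex.continuous_conj.comp (continuous_pow j)).continuousOn
  have hpe : ∀ p : ℝ × ℝ, Complex.polarCoord.symm p = p.1 * Complex.exp (p.2 * I) := by
    intro p
    rw [Complex.polarCoord_symm_apply, Complex.exp_mul_I]
    push_cast
    rfl
  have e1 : ∫ u in uD, H u = ∫ p in Ioo (0 : ℝ) 1 ×ˢ Ioo (-Real.pi) Real.pi,
        p.1 • H (p.1 * Complex.exp (p.2 * I)) := by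
    rw [← integral_indicator uD_measurable, ← Complex.integral_comp_polarCoord_symm,
      polarCoord_target, ← integral_indicator (measurableSet_Ioi.prod measurableSet_Ioo),
      ← integral_indicator (measurableSet_Ioo.prod measurableSet_Ioo)]
    congr 1
    ext p
    simp only [indicator, hpe, mem_prod, mem_Ioi, mem_Ioo, mem_uD, norm_mul,
      Complex.norm_exp_ofReal_mul_I, mul_one, Complex.norm_real, Real.norm_eq_abs]
    by_cases h1 : 0 < p.1
    · simp only [h1, true_and, abs_of_pos h1]
      by_cases h2 : p.1 < 1 <;> simp [h2]
    · simp [h1]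
  have hc : ContinuousOn (fun p : ℝ × ℝ => p.1 • H (p.1 * Complex.exp (p.2 * I)))
      (Ioo 0 1 ×ˢ Ioo (-Real.pi) Real.pi) := by
    refine ContinuousOn.smul continuous_fst.continuousOn ?_
    refine hHc.comp (by fun_prop) ?_
    rintro ⟨ρ, θ⟩ ⟨h1, h2⟩
    simp [mem_uD, Complex.norm_exp_ofReal_mul_I, abs_of_pos h1.1, h1.2]
  have hms : MeasurableSet (Ioo (0 : ℝ) 1 ×ˢ Ioo (-Real.pi) Real.pi) :=
    measurableSet_Ioo.prod measurableSet_Ioo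
  have hfin : IntegrableOn (fun p : ℝ × ℝ => p.1 • H (p.1 * Complex.exp (p.2 * I)))
      (Ioo 0 1 ×ˢ Ioo (-Real.pi) Real.pi) (volume.prod volume) := by
    refine ⟨hc.aestronglyMeasurable hms, ?_⟩
    have := lintegral_ball_polar 0 1 (fun u => ENNReal.ofReal ‖H u‖)
      (ENNReal.continuous_ofReal.comp_continuousOn hHc.norm)
    rw [show ball (0 : ℂ) 1 = uD from rfl] at this
    rw [this] at hfin
    rw [hasFiniteIntegral_iff_norm, setLIntegral_prod]
    · refine lt_of_le_of_lt (le_of_eq ?_) hfin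
      refine setLIntegral_congr_fun measurableSet_Ioo fun ρ hρ => ?_
      refine lintegral_congr fun θ => ?_
      rw [norm_smul, Real.norm_of_nonneg hρ.1.le, ENNReal.ofReal_mul hρ.1.le, zero_add]
    · exact (hc.norm.aemeasurable hms).ennreal_ofReal
  have e2 : ∫ u in uD, H u = Real.pi * (iteratedDeriv j G 0 / (j.factorial * (j + 1))) := by
    rw [e1, Measure.volume_eq_prod, setIntegral_prod _ hfin]
    have : ∀ ρ ∈ Ioo (0 : ℝ) 1, ∫ θ in Ioo (-Real.pi) Real.pi,
        ρ • H (ρ * Complex.exp (θ * I)) =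
        ((ρ ^ (2 * j + 1) : ℝ) : ℂ) * ((2 * Real.pi) * (iteratedDeriv j G 0 / j.factorial)) := by
      intro ρ hρ
      rw [integral_smul]
      simp only [hH]
      rw [circle_coeff hG j hρ.1 hρ.2]
      simp only [Complex.real_smul]
      push_cast
      ring
    rw [setIntegral_congr_fun measurableSet_Ioo this, integral_mul_const]
    have h3 : ∫ ρ in Ioo (0 : ℝ) 1, ((ρ ^ (2 * j + 1) : ℝ) : ℂ) =
        ((1 / (2 * j + 2) : ℝ) : ℂ) := by
      rw [integral_complex_ofReal, ← integral_Ioc_eq_integral_Ioo,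
        ← intervalIntegral.integral_of_le zero_le_one, integral_pow]
      push_cast
      congr 1
      simp
      ring
    rw [h3]
    have h4 : (j : ℂ) + 1 ≠ 0 := by exact_mod_cast Nat.succ_ne_zero j
    have h5 : 2 * (j : ℂ) + 2 ≠ 0 := by
      intro h; apply h4; linear_combination h / 2
    have h6 : (j.factorial : ℂ) ≠ 0 := by exact_mod_cast j.factorial_ne_zero
    push_cast
    field_simp
  rw [nA, Measure.restrict_smul, integral_smul_measure, e2]
  have : (Real.pi : ℂ) ≠ 0 := by exact_mod_cast Real.pi_ne_zero
  rw [ENNReal.toReal_inv, ENNReal.toReal_ofReal Real.pi_pos.le, Complex.real_smul]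
  push_cast
  field_simp

/-- A holomorphic function on the disc with a zero of order `m` at `0` is exponentially small
in `m` on the disc of radius `1 / 4`. -/
lemma vanish_bound {G : ℂ → ℂ} (hG : DifferentiableOn ℂ G uD) (m : ℕ)
    (hv : ∀ j < m, iteratedDeriv j G 0 = 0) {B : ℝ}
    (hB : ∫⁻ z in uD, ENNReal.ofReal (‖G z‖ ^ 2) ∂nA ≤ ENNReal.ofReal B) (hB0 : 0 ≤ B)
    {u : ℂ} (hu : ‖u‖ ≤ 1 / 4) : ‖G u‖ ^ 2 ≤ 16 * B * (1 / 4) ^ m := by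
  have hsup : ∀ v : ℂ, ‖v‖ ≤ 1 / 2 → ‖G v‖ ≤ Real.sqrt (4 * B) := by
    intro v hv
    have hsub : ball v (1 / 2) ⊆ uD := by
      intro z hz
      rw [mem_uD]
      rw [mem_ball, dist_eq_norm] at hz
      have := norm_add_le (z - v) v
      rw [sub_add_cancel] at this
      linarith
    have h1 := (subMean (by norm_num) (hG.mono hsub)).trans ((lintegral_mono_set hsub).trans hB)
    rw [← ENNReal.ofReal_mul (by positivity), ENNReal.ofReal_le_ofReal_iff hB0] at h1
    apply Real.le_sqrt_of_sq_le
    linarith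
  set S := Real.sqrt (4 * B) with hS
  have hS0 : 0 ≤ S := Real.sqrt_nonneg _
  have hS2 : S ^ 2 = 4 * B := Real.sq_sqrt (by positivity)
  have hcoef : ∀ n, ‖iteratedDeriv n G 0‖ ≤ n.factorial * S / (1 / 2) ^ n := by
    intro n
    refine Complex.norm_iteratedDeriv_le_of_forall_mem_sphere_norm_le n (by norm_num) ?_ ?_
    · refine DifferentiableOn.diffContOnCl (hG.mono ?_)
      refine closure_ball_subset_closedBall.trans (closedBall_subset_ball (by norm_num))
    · intro z hz
      apply hsup
      rw [mem_sphere_zero_iff_norm] at hz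
      exact hz.le
  have hu1 : u ∈ ball (0 : ℂ) 1 := by rw [mem_ball_zero_iff]; linarith
  have hs := Complex.hasSum_taylorSeries_on_ball hG hu1
  have hterm : ∀ n, ‖((n.factorial : ℂ)⁻¹ • (u - 0) ^ n • iteratedDeriv n G 0)‖ ≤ S * (1 / 2) ^ n := by
    intro n
    have hf : (0 : ℝ) < n.factorial := by exact_mod_cast n.factorial_pos
    simp only [norm_smul, norm_inv, sub_zero, norm_pow, Complex.norm_natCast]
    calc (n.factorial : ℝ)⁻¹ * (‖u‖ ^ n * ‖iteratedDeriv n G 0‖)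
        ≤ (n.factorial : ℝ)⁻¹ * ((1 / 4) ^ n * (n.factorial * S / (1 / 2) ^ n)) := by
          gcongr
          exact hcoef n
      _ = S * (1 / 2) ^ n := by
          rw [show (1 / 4 : ℝ) = 1 / 2 * (1 / 2) by norm_num, mul_pow]
          field_simp
  have hs2 := (hasSum_nat_add_iff' m).2 hs
  rw [Finset.sum_eq_zero, sub_zero (G u)] at hs2
  · have hgeo : HasSum (fun n : ℕ => S * (1 / 2 : ℝ) ^ (n + m)) (S * (1 / 2) ^ m * 2) := by
      have := (hasSum_geometric_two).mul_left (S * (1 / 2 : ℝ) ^ m)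
      have e : (fun n : ℕ => S * (1 / 2 : ℝ) ^ (n + m)) =
          fun n : ℕ => S * (1 / 2 : ℝ) ^ m * (1 / 2 : ℝ) ^ n := by
        ext n
        rw [pow_add]
        ring
      rw [e]
      exact this
    have hle := hs2.norm_le_of_bounded hgeo fun n => hterm (n + m)
    calc ‖G u‖ ^ 2 ≤ (S * (1 / 2) ^ m * 2) ^ 2 := by gcongr
      _ = 16 * B * (1 / 4) ^ m := by
        rw [mul_pow, mul_pow, hS2, show (1 / 4 : ℝ) = (1 / 2) ^ 2 by norm_num, ← pow_mul, ← pow_mul,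
          mul_comm m 2]
        ring
  · intro n hn
    rw [hv n (Finset.mem_range.1 hn)]
    simp

/-! ### The Hilbert space structure of `𝒟_*` and approximation numbers -/

/-- The Dirichlet integral `∫_D |f'|² dA`. -/
def dirE (f : ℂ → ℂ) : ℝ≥0∞ := ∫⁻ z in uD, ENNReal.ofReal (‖deriv f z‖ ^ 2) ∂nA

lemma eDNormSq_eq (f : ℂ → ℂ) : eDNormSq f = ENNReal.ofReal (‖f 0‖ ^ 2) + dirE f := by
  simp [eDNormSq, eDNormSqW, dirE]

lemma eDNormSq_eq_of_zero {f : ℂ → ℂ} (h : f 0 = 0) : eDNormSq f = dirE f := by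
  simp [eDNormSq_eq, h]

lemma memDStar_iff {f : ℂ → ℂ} :
    MemDStar f ↔ DifferentiableOn ℂ f uD ∧ dirE f < ⊤ ∧ f 0 = 0 := by
  have : eDNormSqW 0 f = eDNormSq f := rfl
  unfold MemDStar MemDWStar MemDW
  rw [this, eDNormSq_eq]
  simp [ENNReal.add_lt_top, and_assoc]

lemma memLp_deriv {f : ℂ → ℂ} (hf : DifferentiableOn ℂ f uD) (h : dirE f < ⊤) :
    MemLp (deriv f) 2 (nA.restrict uD) := by
  have hm : AEStronglyMeasurable (deriv f) (nA.restrict uD) :=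
    (hf.deriv uD_isOpen).continuousOn.aestronglyMeasurable uD_measurable
  rw [memLp_two_iff_integrable_sq_norm hm]
  refine ⟨hm.norm.pow 2, ?_⟩
  rw [hasFiniteIntegral_iff_norm]
  refine lt_of_le_of_lt (le_of_eq ?_) h
  refine lintegral_congr fun z => ?_
  simp

lemma lp_norm_sq {g : ℂ → ℂ} (h : MemLp g 2 (nA.restrict uD)) :
    ENNReal.ofReal (‖h.toLp g‖ ^ 2) = ∫⁻ z in uD, ENNReal.ofReal (‖g z‖ ^ 2) ∂nA := by
  rw [ENNReal.ofReal_pow (norm_nonneg _), ofReal_norm, Lp.enorm_toLp,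
    eLpNorm_eq_lintegral_rpow_enorm_toReal (by norm_num) (by norm_num)]
  simp only [ENNReal.toReal_ofNat, ENNReal.rpow_ofNat, one_div]
  rw [← ENNReal.rpow_natCast, ← ENNReal.rpow_mul]
  simp only [Nat.cast_ofNat, ne_eq, OfNat.ofNat_ne_zero, not_false_eq_true, inv_mul_cancel₀,
    ENNReal.rpow_one]
  refine lintegral_congr fun z => ?_
  rw [ENNReal.ofReal_pow (norm_nonneg _), ofReal_norm]

lemma deriv_add_uD {f g : ℂ → ℂ} (hf : DifferentiableOn ℂ f uD) (hg : DifferentiableOn ℂ g uD)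
    {z : ℂ} (hz : z ∈ uD) : deriv (f + g) z = deriv f z + deriv g z :=
  deriv_add (hf.differentiableAt (uD_isOpen.mem_nhds hz))
    (hg.differentiableAt (uD_isOpen.mem_nhds hz))

lemma deriv_smul_uD {f : ℂ → ℂ} (c : ℂ) {z : ℂ} :
    deriv (c • f) z = c * deriv f z := by
  rw [deriv_const_smul_field, smul_eq_mul]

lemma dirE_lt_top_of_memLp {f : ℂ → ℂ} (h : MemLp (deriv f) 2 (nA.restrict uD)) :
    dirE f < ⊤ := by
  unfold dirE
  rw [← lp_norm_sq h]
  exact ENNReal.ofReal_lt_top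

/-- The space `𝒟_*` as a subspace of all functions `ℂ → ℂ`. Elements that agree on the disc are
not identified, so the Dirichlet norm is only a seminorm on it. -/
def dStar : Submodule ℂ (ℂ → ℂ) where
  carrier := {f | MemDStar f}
  zero_mem' := by
    rw [mem_ofPred_eq, memDStar_iff]
    refine ⟨differentiableOn_const 0, ?_, rfl⟩
    have : deriv (0 : ℂ → ℂ) = fun _ => 0 := by ext z; exact deriv_const z 0
    simp [dirE, this]
  add_mem' := by
    intro f g hf hg
    rw [mem_ofPred_eq, memDStar_iff] at *
    refine ⟨hf.1.add hg.1, ?_, by simp [hf.2.2, hg.2.2]⟩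
    refine dirE_lt_top_of_memLp
      (((memLp_deriv hf.1 hf.2.1).add (memLp_deriv hg.1 hg.2.1)).ae_eq ?_)
    filter_upwards [ae_restrict_mem uD_measurable] with z hz
    exact (deriv_add_uD hf.1 hg.1 hz).symm
  smul_mem' := by
    intro c f hf
    rw [mem_ofPred_eq, memDStar_iff] at *
    refine ⟨hf.1.const_smul c, ?_, by simp [hf.2.2]⟩
    refine dirE_lt_top_of_memLp (((memLp_deriv hf.1 hf.2.1).const_smul c).ae_eq ?_)
    filter_upwards with z
    simp [deriv_smul_uD]

lemma mem_dStar {f : ℂ → ℂ} :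
    f ∈ dStar ↔ DifferentiableOn ℂ f uD ∧ dirE f < ⊤ ∧ f 0 = 0 := memDStar_iff

lemma dStar_memLp (f : dStar) : MemLp (deriv (f : ℂ → ℂ)) 2 (nA.restrict uD) :=
  memLp_deriv (mem_dStar.1 f.2).1 (mem_dStar.1 f.2).2.1

/-- The isometry `f ↦ f'` of `𝒟_*` into `L²(D, dA)`. -/
def toL2 : dStar →ₗ[ℂ] Lp ℂ 2 (nA.restrict uD) where
  toFun f := (dStar_memLp f).toLp _
  map_add' f g := by
    rw [← MemLp.toLp_add, MemLp.toLp_eq_toLp_iff]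
    filter_upwards [ae_restrict_mem uD_measurable] with z hz
    exact deriv_add_uD (mem_dStar.1 f.2).1 (mem_dStar.1 g.2).1 hz
  map_smul' c f := by
    rw [RingHom.id_apply, ← MemLp.toLp_const_smul, MemLp.toLp_eq_toLp_iff]
    filter_upwards with z
    simp [deriv_smul_uD]

lemma toL2_norm (f : dStar) : ENNReal.ofReal (‖toL2 f‖ ^ 2) = dirE f := lp_norm_sq (dStar_memLp f)

lemma dStar_norm (f : dStar) : eDNormSq f = ENNReal.ofReal (‖toL2 f‖ ^ 2) := by
  rw [toL2_norm, eDNormSq_eq_of_zero (mem_dStar.1 f.2).2.2]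

lemma toL2_inner (k f : dStar) : inner ℂ (toL2 k) (toL2 f) =
    ∫ z in uD, deriv (f : ℂ → ℂ) z * (starRingEnd ℂ) (deriv (k : ℂ → ℂ) z) ∂nA := by
  rw [L2.inner_def]
  refine integral_congr_ae ?_
  filter_upwards [(dStar_memLp k).coeFn_toLp, (dStar_memLp f).coeFn_toLp] with z h1 h2
  have e1 : (toL2 k : ℂ → ℂ) z = deriv (k : ℂ → ℂ) z := h1
  have e2 : (toL2 f : ℂ → ℂ) z = deriv (f : ℂ → ℂ) z := h2
  rw [e1, e2]
  simp

/-- The finite rank operator `f ↦ f - P f`, where `P` is the orthogonal projection onto the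
orthogonal complement of finitely many elements of `𝒟_*`. -/
lemma exists_proj {ι : Type} [Fintype ι] (k : ι → dStar) :
    ∃ R : dStar →ₗ[ℂ] dStar, Module.rank ℂ (LinearMap.range R) ≤ Fintype.card ι ∧
      ∀ f, (∀ i, inner ℂ (toL2 (k i)) (toL2 (f - R f)) = 0) ∧ ‖toL2 (f - R f)‖ ≤ ‖toL2 f‖ := by
  set S : Submodule ℂ dStar := Submodule.span ℂ (range k) with hS
  set K : Submodule ℂ (Lp ℂ 2 (nA.restrict uD)) := S.map toL2 with hK
  have : FiniteDimensional ℂ S := FiniteDimensional.span_of_finite ℂ (finite_range k)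
  have : FiniteDimensional ℂ K := inferInstance
  -- a linear lift of `K` back to `𝒟_*`
  obtain ⟨σ, hσ⟩ := LinearMap.exists_rightInverse_of_surjective (toL2.submoduleMap S)
    (LinearMap.range_eq_top.2 (toL2.submoduleMap_surjective S))
  set R : dStar →ₗ[ℂ] dStar :=
    (S.subtype ∘ₗ σ) ∘ₗ (K.orthogonalProjectionOnto : _ →ₗ[ℂ] K) ∘ₗ toL2 with hR
  have hRt : ∀ f, toL2 (R f) = K.starProjection (toL2 f) := by
    intro f
    have := LinearMap.congr_fun hσ (K.orthogonalProjectionOnto (toL2 f))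
    have h2 := congrArg Subtype.val this
    simpa [hR] using h2
  refine ⟨R, ?_, fun f => ?_⟩
  · have h1 : LinearMap.range R ≤ S := by
      rintro _ ⟨f, rfl⟩
      exact (σ (K.orthogonalProjectionOnto (toL2 f))).2
    refine (Submodule.rank_mono h1).trans ?_
    refine (rank_span_le _).trans ?_
    refine Cardinal.mk_range_le.trans ?_
    simp
  · have hsub : toL2 (f - R f) = toL2 f - K.starProjection (toL2 f) := by
      rw [map_sub, hRt]
    have hperp : toL2 (f - R f) ∈ Kᗮ := by
      rw [hsub]
      exact K.sub_starProjection_mem_orthogonal _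
    refine ⟨fun i => ?_, ?_⟩
    · refine (Submodule.mem_orthogonal K _).1 hperp _ ?_
      exact Submodule.mem_map_of_mem (Submodule.subset_span ⟨i, rfl⟩)
    · have h2 : toL2 (f - R f) = Kᗮ.starProjection (toL2 f) := by
        rw [hsub, Submodule.starProjection_orthogonal']
        simp
      rw [h2]
      exact Kᗮ.norm_starProjection_apply_le _

/-- An operator which is small on the orthogonal complement of finitely many vectors has small
approximation numbers. -/
lemma approx_upper {φ : ℂ → ℂ} {ι : Type} [Fintype ι] (k : ι → dStar) (ε : ℝ≥0∞)
    (h : ∀ f : dStar, (∀ i, inner ℂ (toL2 (k i)) (toL2 f) = 0) →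
      eDNormSq (compOp φ f) ≤ ε ^ 2 * eDNormSq f) :
    eApproxNum MemDStar eDNormSq (compOp φ) (Fintype.card ι + 1) ≤ ε := by
  obtain ⟨R, hrank, hR⟩ := exists_proj k
  obtain ⟨π, hπ⟩ := LinearMap.exists_extend (LinearMap.id : dStar →ₗ[ℂ] dStar)
  have hπ' : ∀ f : dStar, π (f : ℂ → ℂ) = f := fun f => LinearMap.congr_fun hπ f
  set T : (ℂ → ℂ) →ₗ[ℂ] (ℂ → ℂ) :=
    { toFun := fun f z => f (φ z)
      map_add' := fun _ _ => rfl
      map_smul' := fun _ _ => rfl } with hT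
  have hle : eApproxNum MemDStar eDNormSq (compOp φ) (Fintype.card ι + 1) ≤
      eOpNorm MemDStar eDNormSq
        (fun f z => compOp φ f z - ((T ∘ₗ dStar.subtype ∘ₗ R) ∘ₗ π) f z) := by
    refine sInf_le ⟨(T ∘ₗ dStar.subtype ∘ₗ R) ∘ₗ π, ?_, rfl⟩
    have h1 : LinearMap.rank ((T ∘ₗ dStar.subtype ∘ₗ R) ∘ₗ π) ≤ Fintype.card ι := by
      refine (LinearMap.rank_comp_le_left _ _).trans ?_
      refine (LinearMap.rank_comp_le_right _ _).trans ?_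
      refine (LinearMap.rank_comp_le_right _ _).trans ?_
      exact hrank
    refine lt_of_le_of_lt h1 ?_
    exact_mod_cast Nat.lt_succ_self _
  refine hle.trans (sInf_le ?_)
  intro f hf
  have hf' : f ∈ dStar := hf
  have e : (fun z => compOp φ f z - ((T ∘ₗ dStar.subtype ∘ₗ R) ∘ₗ π) f z) =
      compOp φ ((⟨f, hf'⟩ - R ⟨f, hf'⟩ : dStar) : ℂ → ℂ) := by
    ext z
    simp [hT, compOp, hπ' ⟨f, hf'⟩]
  simp only [e]
  refine (h _ (hR ⟨f, hf'⟩).1).trans ?_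
  gcongr
  rw [dStar_norm, show eDNormSq f = _ from dStar_norm ⟨f, hf'⟩]
  apply ENNReal.ofReal_le_ofReal
  have := (hR ⟨f, hf'⟩).2
  gcongr

/-- An operator which is bounded below on an `n`-dimensional space has a large `n`-th
approximation number. -/
lemma approx_lower {φ : ℂ → ℂ} {n : ℕ} (g : Fin n → dStar) {b B : ℝ} (hB : 0 < B)
    (h1 : ∀ α : Fin n → ℂ, ‖toL2 (∑ i, α i • g i)‖ ^ 2 ≤ B * ∑ i, ‖α i‖ ^ 2)
    (h2 : ∀ α : Fin n → ℂ, ENNReal.ofReal (b * ∑ i, ‖α i‖ ^ 2) ≤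
      eDNormSq (compOp φ ((∑ i, α i • g i : dStar) : ℂ → ℂ))) :
    ENNReal.ofReal (Real.sqrt (b / B)) ≤ eApproxNum MemDStar eDNormSq (compOp φ) n := by
  refine le_sInf ?_
  rintro c ⟨R, hR, rfl⟩
  refine le_sInf ?_
  intro C hC
  -- by dimension count, `R` kills some nonzero element of the span of the `g i`
  set L : (Fin n → ℂ) →ₗ[ℂ] LinearMap.range R :=
    R.rangeRestrict ∘ₗ dStar.subtype ∘ₗ Fintype.linearCombination ℂ g with hL
  have hni : ¬ Function.Injective L := by
    intro hi
    have := LinearMap.rank_le_of_injective L hi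
    rw [rank_fin_fun] at this
    exact absurd hR (not_lt.2 this)
  obtain ⟨α, hα, hα0⟩ : ∃ α, L α = 0 ∧ α ≠ 0 := by
    by_contra hcon
    push Not at hcon
    exact hni ((injective_iff_map_eq_zero L).2 hcon)
  set f : dStar := ∑ i, α i • g i with hf
  have hRf : R f = 0 := by
    have := congrArg Subtype.val hα
    simpa [hL, Fintype.linearCombination_apply, hf] using this
  have hCf := hC f f.2
  simp only [hRf, Pi.zero_apply, sub_zero] at hCf
  have hpos : 0 < ∑ i, ‖α i‖ ^ 2 := by
    obtain ⟨i, hi⟩ := Function.ne_iff.1 hα0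
    refine Finset.sum_pos' (fun i _ => by positivity) ⟨i, Finset.mem_univ _, ?_⟩
    have : 0 < ‖α i‖ := norm_pos_iff.2 hi
    positivity
  by_cases hCt : C = ⊤
  · simp [hCt]
  lift C to ℝ≥0 using hCt
  have h3 : ENNReal.ofReal (b * ∑ i, ‖α i‖ ^ 2) ≤
      ENNReal.ofReal ((C : ℝ) ^ 2 * (B * ∑ i, ‖α i‖ ^ 2)) := by
    refine (h2 α).trans (hCf.trans ?_)
    have hCC : ENNReal.ofReal ((C : ℝ) ^ 2) = (C : ℝ≥0∞) ^ 2 := by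
      rw [ENNReal.ofReal_pow (NNReal.coe_nonneg C), ENNReal.ofReal_coe_nnreal]
    rw [dStar_norm, ENNReal.ofReal_mul (by positivity), hCC]
    gcongr
    exact h1 α
  rw [ENNReal.ofReal_le_ofReal_iff (by positivity)] at h3
  have h4 : b / B ≤ (C : ℝ) ^ 2 := by
    rw [div_le_iff₀ hB]
    nlinarith
  rw [← ENNReal.ofReal_coe_nnreal]
  apply ENNReal.ofReal_le_ofReal
  exact Real.sqrt_le_iff.2 ⟨C.2, h4⟩

lemma approx_antitone (φ : ℂ → ℂ) :
    Antitone (eApproxNum MemDStar eDNormSq (compOp φ)) := by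
  intro m n hmn
  refine sInf_le_sInf ?_
  rintro c ⟨R, hR, rfl⟩
  exact ⟨R, hR.trans_le (by exact_mod_cast hmn), rfl⟩

/-! ### Disc automorphisms and the local estimate -/

/-- The disc automorphism `b_r(w) = (w - r) / (1 - r w)`, for real `r ∈ (-1, 1)`; its inverse
is `b_{-r}`. -/
def mob (r : ℝ) (w : ℂ) : ℂ := (w - r) / (1 - r * w)

/-- The derivative of `mob r`. -/
def mob' (r : ℝ) (w : ℂ) : ℂ := (1 - (r : ℂ) ^ 2) / (1 - r * w) ^ 2

lemma mob_den_lower (r : ℝ) {w : ℂ} (hw : w ∈ uD) : 1 - |r| ≤ ‖1 - (r : ℂ) * w‖ := by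
  have h := norm_sub_norm_le (1 : ℂ) (r * w)
  rw [norm_one, norm_mul, Complex.norm_real, Real.norm_eq_abs] at h
  have := mem_uD.1 hw
  nlinarith [abs_nonneg r, norm_nonneg w]

lemma mob_den {r : ℝ} (hr : |r| < 1) {w : ℂ} (hw : w ∈ uD) : 1 - (r : ℂ) * w ≠ 0 := by
  intro h
  have := mob_den_lower r hw
  rw [h, norm_zero] at this
  linarith

lemma mob_hasDerivAt {r : ℝ} (hr : |r| < 1) {w : ℂ} (hw : w ∈ uD) :
    HasDerivAt (mob r) (mob' r w) w := by
  have hd := mob_den hr hw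
  have h1 : HasDerivAt (fun w : ℂ => w - r) 1 w := (hasDerivAt_id w).sub_const _
  have h2 : HasDerivAt (fun w : ℂ => 1 - (r : ℂ) * w) (-(r : ℂ)) w := by
    simpa using ((hasDerivAt_id w).const_mul (r : ℂ)).const_sub 1
  have h3 := h1.div h2 hd
  refine h3.congr_deriv ?_
  unfold mob'
  congr 1
  ring

lemma mob_mem {r : ℝ} (hr : |r| < 1) {w : ℂ} (hw : w ∈ uD) : mob r w ∈ uD := by
  have hd := mob_den hr hw
  rw [mem_uD, mob, norm_div, div_lt_one (norm_pos_iff.2 hd)]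
  have hw' := mem_uD.1 hw
  have key : ‖1 - (r : ℂ) * w‖ ^ 2 - ‖w - r‖ ^ 2 = (1 - r ^ 2) * (1 - ‖w‖ ^ 2) := by
    rw [← Complex.normSq_eq_norm_sq, ← Complex.normSq_eq_norm_sq, ← Complex.normSq_eq_norm_sq]
    simp only [Complex.normSq_apply, sub_re, sub_im, one_re, one_im, mul_re, mul_im, ofReal_re,
      ofReal_im]
    ring
  have h1 : 0 < 1 - r ^ 2 := by
    have := (sq_lt_one_iff_abs_lt_one r).2 hr
    linarith
  have h2 : 0 < 1 - ‖w‖ ^ 2 := by nlinarith [norm_nonneg w]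
  have h3 := mul_pos h1 h2
  exact lt_of_pow_lt_pow_left₀ 2 (norm_nonneg _) (by linarith)

lemma mob_neg_mob {r : ℝ} (hr : |r| < 1) {w : ℂ} (hw : w ∈ uD) : mob (-r) (mob r w) = w := by
  have hd := mob_den hr hw
  have hd2 := mob_den (r := -r) (by simpa using hr) (mob_mem hr hw)
  rw [mob, div_eq_iff hd2]
  have h1 : mob r w * (1 - r * w) = w - r := div_mul_cancel₀ _ hd
  push_cast
  linear_combination h1

lemma mob_mob_neg {r : ℝ} (hr : |r| < 1) {w : ℂ} (hw : w ∈ uD) : mob r (mob (-r) w) = w := by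
  have := mob_neg_mob (r := -r) (by simpa using hr) hw
  simpa using this

lemma mob'_mul {r : ℝ} (hr : |r| < 1) {w : ℂ} (hw : w ∈ uD) :
    mob' r (mob (-r) w) * mob' (-r) w = 1 := by
  have hr' : |-r| < 1 := by simpa using hr
  have h1 := (mob_hasDerivAt hr (mob_mem hr' hw)).comp w (mob_hasDerivAt hr' hw)
  have h2 : HasDerivAt (mob r ∘ mob (-r)) 1 w := by
    refine (hasDerivAt_id w).congr_of_eventuallyEq ?_
    filter_upwards [uD_isOpen.mem_nhds hw] with z hz
    exact mob_mob_neg hr hz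
  exact h1.unique h2

lemma mob_injOn {r : ℝ} (hr : |r| < 1) : InjOn (mob r) uD := by
  intro a ha b hb h
  rw [← mob_neg_mob hr ha, ← mob_neg_mob hr hb, h]

lemma mob_image {r : ℝ} (hr : |r| < 1) : mob r '' uD = uD := by
  apply Subset.antisymm
  · rintro _ ⟨w, hw, rfl⟩
    exact mob_mem hr hw
  · intro w hw
    exact ⟨mob (-r) w, mob_mem (by simpa using hr) hw, mob_mob_neg hr hw⟩

lemma mob_differentiableOn {r : ℝ} (hr : |r| < 1) : DifferentiableOn ℂ (mob r) uD :=
  fun _ hw => (mob_hasDerivAt hr hw).differentiableAt.differentiableWithinAt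

lemma mob'_bound {r : ℝ} (hr : |r| < 1) {w : ℂ} (hw : w ∈ uD) :
    ‖mob' r w‖ ≤ 2 / (1 - |r|) := by
  have h1 := mob_den_lower r hw
  have h0 : 0 < 1 - |r| := by linarith
  have h2 : ‖(1 : ℂ) - (r : ℂ) ^ 2‖ = 1 - |r| ^ 2 := by
    rw [← Complex.ofReal_one, ← Complex.ofReal_pow, ← Complex.ofReal_sub, Complex.norm_real,
      Real.norm_of_nonneg, sq_abs]
    nlinarith [(sq_lt_one_iff_abs_lt_one r).2 hr]
  rw [mob', norm_div, norm_pow, h2]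
  calc (1 - |r| ^ 2) / ‖1 - (r : ℂ) * w‖ ^ 2 ≤ (1 - |r| ^ 2) / (1 - |r|) ^ 2 := by
        gcongr
        nlinarith [abs_nonneg r]
    _ = (1 + |r|) / (1 - |r|) := by
        field_simp
        ring
    _ ≤ 2 / (1 - |r|) := by
        gcongr
        linarith

lemma kel_deriv {r : ℝ} (hr : |r| < 1) (j : ℕ) {w : ℂ} (hw : w ∈ uD) :
    HasDerivAt (fun w => mob r w ^ j - mob r 0 ^ j) (j * mob r w ^ (j - 1) * mob' r w) w :=
  ((mob_hasDerivAt hr hw).pow j).sub_const _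

lemma nA_uD_lt_top : nA uD < ⊤ := by
  rw [nA, Measure.smul_apply, smul_eq_mul]
  refine ENNReal.mul_lt_top ?_ measure_ball_lt_top
  simp [Real.pi_pos]

/-- A holomorphic function with bounded derivative has finite Dirichlet integral. -/
lemma dirE_lt_top_of_bound {f : ℂ → ℂ} (C : ℝ) (h : ∀ z ∈ uD, ‖deriv f z‖ ≤ C) :
    dirE f < ⊤ := by
  have h1 : dirE f ≤ ∫⁻ _ in uD, ENNReal.ofReal (C ^ 2) ∂nA := by
    refine setLIntegral_mono measurable_const fun z hz => ?_
    apply ENNReal.ofReal_le_ofReal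
    have := h z hz
    gcongr
  refine h1.trans_lt ?_
  rw [setLIntegral_const]
  exact ENNReal.mul_lt_top ENNReal.ofReal_lt_top nA_uD_lt_top

lemma kel_mem {r : ℝ} (hr : |r| < 1) (j : ℕ) :
    (fun w => mob r w ^ j - mob r 0 ^ j) ∈ dStar := by
  rw [mem_dStar]
  refine ⟨fun w hw => (kel_deriv hr j hw).differentiableAt.differentiableWithinAt,
    dirE_lt_top_of_bound (j * (2 / (1 - |r|))) fun z hz => ?_, by simp⟩
  rw [(kel_deriv hr j hz).deriv, norm_mul, norm_mul, norm_pow, Complex.norm_natCast]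
  have h1 := mob'_bound hr hz
  have h2 : ‖mob r z‖ ^ (j - 1) ≤ 1 := pow_le_one₀ (norm_nonneg _) (mem_uD.1 (mob_mem hr hz)).le
  have : (j : ℝ) * ‖mob r z‖ ^ (j - 1) ≤ j := by
    have : (0 : ℝ) ≤ j := j.cast_nonneg
    nlinarith
  gcongr

/-- The function `b_r^j - b_r(0)^j` of `𝒟_*`. Orthogonality to these, for `1 ≤ j ≤ m`, means that
the derivative of `f ∘ b_{-r}` vanishes to order `m` at the origin. -/
def kel (r : ℝ) (hr : |r| < 1) (j : ℕ) : dStar := ⟨_, kel_mem hr j⟩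

/-- The derivative of `f ∘ b_{-r}`. -/
def pull (r : ℝ) (f : ℂ → ℂ) (u : ℂ) : ℂ := deriv f (mob (-r) u) * mob' (-r) u

lemma pull_differentiableOn {r : ℝ} (hr : |r| < 1) {f : ℂ → ℂ} (hf : DifferentiableOn ℂ f uD) :
    DifferentiableOn ℂ (pull r f) uD := by
  have hr' : |-r| < 1 := by simpa using hr
  refine DifferentiableOn.mul ((hf.deriv uD_isOpen).comp (mob_differentiableOn hr')
    fun w hw => mob_mem hr' hw) ?_
  unfold mob'
  refine DifferentiableOn.div (differentiableOn_const _) ?_ fun w hw => pow_ne_zero _ (mob_den hr' hw)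
  fun_prop

/-- Conformal invariance of the Dirichlet integral. -/
lemma pull_energy {r : ℝ} (hr : |r| < 1) (f : ℂ → ℂ) :
    ∫⁻ u in uD, ENNReal.ofReal (‖pull r f u‖ ^ 2) ∂nA = dirE f := by
  have hr' : |-r| < 1 := by simpa using hr
  have := lintegral_image_holo_nA uD_measurable (fun z hz => mob_hasDerivAt hr' hz)
    (mob_injOn hr') (fun z => ENNReal.ofReal (‖deriv f z‖ ^ 2))
  rw [mob_image hr'] at this
  rw [dirE, this]
  refine lintegral_congr fun u => ?_
  rw [← ENNReal.ofReal_mul (by positivity), pull, norm_mul, mul_pow, mul_comm]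

lemma integral_image_holo_nA {S : Set ℂ} (hS : MeasurableSet S) {h h' : ℂ → ℂ}
    (hd : ∀ z ∈ S, HasDerivAt h (h' z) z) (hi : InjOn h S) (H : ℂ → ℂ) :
    ∫ w in h '' S, H w ∂nA = ∫ z in S, ((‖h' z‖ ^ 2 : ℝ) : ℂ) * H (h z) ∂nA := by
  have := integral_image_eq_integral_abs_det_fderiv_smul volume hS
    (f := h) (f' := fun z => ((ContinuousLinearMap.toSpanSingleton ℂ (h' z)).restrictScalars ℝ))
    (fun z hz => ((hd z hz).hasFDerivAt.restrictScalars ℝ).hasFDerivWithinAt) hi H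
  simp only [nA, Measure.restrict_smul, integral_smul_measure]
  rw [this]
  congr 1
  refine setIntegral_congr_fun hS fun z _ => ?_
  simp only [det_mul_complex, Complex.real_smul]
  rw [abs_of_nonneg (by positivity)]

/-- The elements `kel r (j + 1)` represent the Taylor coefficients of `f ∘ b_{-r}`. -/
lemma kel_inner {r : ℝ} (hr : |r| < 1) (j : ℕ) (f : dStar) :
    inner ℂ (toL2 (kel r hr (j + 1))) (toL2 f) = iteratedDeriv j (pull r f) 0 / j.factorial := by
  have hr' : |-r| < 1 := by simpa using hr
  obtain ⟨hf, hE, -⟩ := mem_dStar.1 f.2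
  rw [toL2_inner]
  have h1 := integral_image_holo_nA uD_measurable (fun z hz => mob_hasDerivAt hr' hz)
    (mob_injOn hr') (fun z => deriv (f : ℂ → ℂ) z *
      (starRingEnd ℂ) (deriv (kel r hr (j + 1) : ℂ → ℂ) z))
  rw [mob_image hr'] at h1
  rw [h1]
  have h2 : ∀ u ∈ uD, ((‖mob' (-r) u‖ ^ 2 : ℝ) : ℂ) * (deriv (f : ℂ → ℂ) (mob (-r) u) *
      (starRingEnd ℂ) (deriv (kel r hr (j + 1) : ℂ → ℂ) (mob (-r) u))) =
      (j + 1) * (pull r f u * (starRingEnd ℂ) (u ^ j)) := by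
    intro u hu
    have e1 : deriv (kel r hr (j + 1) : ℂ → ℂ) (mob (-r) u) =
        (j + 1) * u ^ j * mob' r (mob (-r) u) := by
      have := (kel_deriv hr (j + 1) (mob_mem hr' hu)).deriv
      rw [mob_mob_neg hr hu] at this
      simpa [kel] using this
    have e2 : ((‖mob' (-r) u‖ ^ 2 : ℝ) : ℂ) = mob' (-r) u * (starRingEnd ℂ) (mob' (-r) u) := by
      rw [Complex.mul_conj, Complex.normSq_eq_norm_sq]
    have e3 : (starRingEnd ℂ) (mob' r (mob (-r) u)) * (starRingEnd ℂ) (mob' (-r) u) = 1 := by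
      rw [← map_mul, mob'_mul hr hu, map_one]
    rw [e1, e2, pull]
    simp only [map_mul, map_add, map_natCast, map_one]
    linear_combination (mob' (-r) u * deriv (f : ℂ → ℂ) (mob (-r) u) * (j + 1) *
      (starRingEnd ℂ) (u ^ j)) * e3
  rw [setIntegral_congr_fun uD_measurable h2, integral_const_mul,
    disc_coeff (pull_differentiableOn hr hf) j]
  · have : ((j : ℂ) + 1) ≠ 0 := by exact_mod_cast Nat.succ_ne_zero j
    have : (j.factorial : ℂ) ≠ 0 := by exact_mod_cast j.factorial_ne_zero
    field_simp
  · have h3 : ∫⁻ u in uD, ENNReal.ofReal ‖pull r f u * (starRingEnd ℂ) (u ^ j)‖ ≤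
        ∫⁻ u in uD, (1 + ENNReal.ofReal (‖pull r f u‖ ^ 2)) := by
      refine setLIntegral_mono' uD_measurable fun u hu => ?_
      rw [← ENNReal.ofReal_one, ← ENNReal.ofReal_add (by norm_num) (by positivity)]
      apply ENNReal.ofReal_le_ofReal
      rw [norm_mul, RCLike.norm_conj, norm_pow]
      have : ‖u‖ ^ j ≤ 1 := pow_le_one₀ (norm_nonneg _) (mem_uD.1 hu).le
      nlinarith [norm_nonneg (pull r f u), sq_nonneg (‖pull r f u‖ - 1)]
    refine h3.trans_lt ?_
    rw [lintegral_add_left measurable_const]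
    refine ENNReal.add_lt_top.2 ⟨by simp [uD], ?_⟩
    have h4 := pull_energy hr (f : ℂ → ℂ)
    rw [lintegral_nA] at h4
    rw [← h4] at hE
    by_contra hcon
    rw [not_lt, top_le_iff] at hcon
    rw [hcon, ENNReal.mul_top (by simp)] at hE
    exact lt_irrefl _ hE

/-- A function orthogonal to `kel r 1, …, kel r m` has a small derivative near `r`. -/
lemma local_est {r : ℝ} (hr : |r| < 1) (m : ℕ) (f : dStar)
    (h : ∀ j < m, inner ℂ (toL2 (kel r hr (j + 1))) (toL2 f) = 0) {w : ℂ} (hw : w ∈ uD)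
    (hb : ‖mob r w‖ ≤ 1 / 4) :
    ENNReal.ofReal (‖deriv (f : ℂ → ℂ) w‖ ^ 2) ≤
      ENNReal.ofReal (16 * (1 / 4) ^ m * (2 / (1 - |r|)) ^ 2) * dirE f := by
  obtain ⟨hf, hE, -⟩ := mem_dStar.1 f.2
  have hr' : |-r| < 1 := by simpa using hr
  have h1 : ‖pull r f (mob r w)‖ ^ 2 ≤ 16 * ‖toL2 f‖ ^ 2 * (1 / 4) ^ m := by
    refine vanish_bound (pull_differentiableOn hr hf) m (fun j hj => ?_) ?_ (by positivity) hb
    · have := h j hj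
      rw [kel_inner] at this
      have hj : (j.factorial : ℂ) ≠ 0 := by exact_mod_cast j.factorial_ne_zero
      simpa [hj] using this
    · rw [pull_energy hr, toL2_norm]
  have h2 : deriv (f : ℂ → ℂ) w = pull r f (mob r w) * mob' r w := by
    rw [pull, mob_neg_mob hr hw]
    have := mob'_mul hr' hw
    rw [neg_neg] at this
    rw [mul_assoc, this, mul_one]
  rw [← toL2_norm, ← ENNReal.ofReal_mul (by
    have : 0 ≤ 1 - |r| := by linarith
    positivity)]
  apply ENNReal.ofReal_le_ofReal
  rw [h2, norm_mul, mul_pow]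
  have h3 := mob'_bound hr hw
  calc ‖pull r f (mob r w)‖ ^ 2 * ‖mob' r w‖ ^ 2
      ≤ (16 * ‖toL2 f‖ ^ 2 * (1 / 4) ^ m) * (2 / (1 - |r|)) ^ 2 := by gcongr
    _ = _ := by ring

/-- The Gram matrix of the functions `kel r 1`. -/
lemma kel_gram {r s : ℝ} (hr : |r| < 1) (hs : |s| < 1) :
    inner ℂ (toL2 (kel r hr 1)) (toL2 (kel s hs 1)) =
      (((1 - r ^ 2) * (1 - s ^ 2) / (1 - r * s) ^ 2 : ℝ) : ℂ) := by
  have hr' : |-r| < 1 := by simpa using hr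
  have h0 : (0 : ℂ) ∈ uD := mem_uD.2 (by simp)
  have e := kel_inner hr 0 (kel s hs 1)
  rw [zero_add] at e
  rw [e, iteratedDeriv_zero, pull]
  have hm : mob (-r) 0 = r := by simp [mob]
  have hrD : (r : ℂ) ∈ uD := mem_uD.2 (by simpa using hr)
  have h1 : deriv (kel s hs 1 : ℂ → ℂ) r = mob' s r := by
    have := (kel_deriv hs 1 hrD).deriv
    simpa [kel] using this
  rw [hm, h1]
  simp [mob']
  ring

/-! ### Cusp maps -/

/-- The half-strip on which cusp exponents are defined. -/
def strip : Set ℂ := {s | -1 < s.re ∧ |s.im| < 2}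

/-- A *cusp exponent*: a holomorphic function `F` on a half-strip, real on the real axis, vanishing
at `0`, whose derivative is comparable to a small positive decreasing function `γ` of the real
part. -/
structure CuspExp (F : ℂ → ℂ) (γ : ℝ → ℝ) : Prop where
  meas : Measurable F
  diff : DifferentiableOn ℂ F strip
  zero : F 0 = 0
  real : ∀ t : ℝ, -1 < t → (F t).im = 0
  pos : ∀ t : ℝ, -1 < t → 0 < γ t
  anti : AntitoneOn γ (Ioi (-1))
  small : ∀ t : ℝ, -1 < t → γ t ≤ 1 / 100
  close : ∀ s ∈ strip, ‖deriv F s - γ s.re‖ ≤ γ s.re / 4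

lemma strip_isOpen : IsOpen strip := by
  have h1 : IsOpen {s : ℂ | -1 < s.re} := isOpen_lt continuous_const Complex.continuous_re
  have h2 : IsOpen {s : ℂ | |s.im| < 2} := isOpen_lt Complex.continuous_im.abs continuous_const
  exact h1.inter h2

lemma strip_convex : Convex ℝ strip := by
  have : strip = {s : ℂ | -1 < s.re} ∩ ({s : ℂ | -2 < s.im} ∩ {s : ℂ | s.im < 2}) := by
    ext s
    simp [strip, abs_lt]
  rw [this]
  exact (convex_halfSpace_re_gt _).inter ((convex_halfSpace_im_gt _).inter (convex_halfSpace_im_lt _))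

lemma ofReal_mem_strip {t : ℝ} (ht : -1 < t) : (t : ℂ) ∈ strip := by
  simp [strip, ht]

namespace CuspExp

variable {F : ℂ → ℂ} {γ : ℝ → ℝ}

lemma hasDerivAt (hF : CuspExp F γ) {s : ℂ} (hs : s ∈ strip) : HasDerivAt F (deriv F s) s :=
  (hF.diff.differentiableAt (strip_isOpen.mem_nhds hs)).hasDerivAt

lemma deriv_le (hF : CuspExp F γ) {s : ℂ} (hs : s ∈ strip) : ‖deriv F s‖ ≤ 5 / 4 * γ s.re := by
  have h1 := hF.close s hs
  have h2 := norm_le_norm_add_norm_sub' (deriv F s) (γ s.re)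
  rw [Complex.norm_real, Real.norm_of_nonneg (hF.pos _ hs.1).le] at h2
  linarith

lemma le_deriv_re (hF : CuspExp F γ) {s : ℂ} (hs : s ∈ strip) :
    3 / 4 * γ s.re ≤ (deriv F s).re := by
  have h1 := (abs_re_le_norm _).trans (hF.close s hs)
  rw [sub_re, ofReal_re, abs_le] at h1
  linarith [h1.1]

lemma le_deriv (hF : CuspExp F γ) {s : ℂ} (hs : s ∈ strip) : 3 / 4 * γ s.re ≤ ‖deriv F s‖ :=
  (hF.le_deriv_re hs).trans (re_le_norm _)

lemma lip (hF : CuspExp F γ) {τ : ℝ} (hτ : -1 < τ) {s t : ℂ} (hs : s ∈ strip) (ht : t ∈ strip)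
    (hs' : τ ≤ s.re) (ht' : τ ≤ t.re) : ‖F s - F t‖ ≤ 5 / 4 * γ τ * ‖s - t‖ := by
  have hc : Convex ℝ (strip ∩ {s : ℂ | τ ≤ s.re}) := strip_convex.inter (convex_halfSpace_re_ge _)
  refine hc.norm_image_sub_le_of_norm_deriv_le
    (fun x hx => (hF.hasDerivAt hx.1).differentiableAt) (fun x hx => ?_) ⟨ht, ht'⟩ ⟨hs, hs'⟩
  refine (hF.deriv_le hx.1).trans ?_
  have := hF.anti hτ hx.1.1 hx.2
  linarith

/-- Along any segment, `F` moves in the direction of that segment. -/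
lemma mono (hF : CuspExp F γ) {T : ℝ} {s t : ℂ} (hs : s ∈ strip) (ht : t ∈ strip)
    (hs' : s.re ≤ T) (ht' : t.re ≤ T) :
    3 / 4 * γ T * ‖s - t‖ ^ 2 ≤ ((F s - F t) * (starRingEnd ℂ) (s - t)).re := by
  set p : ℝ → ℂ := fun x => t + x * (s - t) with hp
  have hpm : ∀ x ∈ Icc (0 : ℝ) 1, p x ∈ strip ∧ (p x).re ≤ T := by
    intro x hx
    have hc : Convex ℝ (strip ∩ {s : ℂ | s.re ≤ T}) :=
      strip_convex.inter (convex_halfSpace_re_le _)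
    have := hc.add_smul_sub_mem ⟨ht, ht'⟩ ⟨hs, hs'⟩ hx
    simpa [hp] using this
  have hpd : ∀ x : ℝ, HasDerivAt p (s - t) x := by
    intro x
    have := ((hasDerivAt_id x).ofReal_comp.mul_const (s - t)).const_add t
    simpa [hp] using this
  have hg : ∀ x ∈ Icc (0 : ℝ) 1,
      HasDerivAt (fun x => (F (p x) * (starRingEnd ℂ) (s - t)).re)
        ((deriv F (p x)).re * ‖s - t‖ ^ 2) x := by
    intro x hx
    have h1 := ((hF.hasDerivAt (hpm x hx).1).comp_of_eq x (hpd x) rfl).mul_const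
      ((starRingEnd ℂ) (s - t))
    have h2 := (Complex.reCLM.hasFDerivAt.comp_hasDerivAt x h1)
    refine h2.congr_deriv ?_
    rw [mul_assoc, Complex.mul_conj, Complex.normSq_eq_norm_sq]
    simp only [reCLM_apply, re_mul_ofReal]
  obtain ⟨c, hc, hc'⟩ := exists_hasDerivAt_eq_slope
    (fun x => (F (p x) * (starRingEnd ℂ) (s - t)).re) _ zero_lt_one
    (fun x hx => (hg x hx).continuousAt.continuousWithinAt) (fun x hx => hg x ⟨hx.1.le, hx.2.le⟩)
  have hcI : c ∈ Icc (0 : ℝ) 1 := ⟨hc.1.le, hc.2.le⟩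
  have e1 : p 1 = s := by simp [hp]
  have e0 : p 0 = t := by simp [hp]
  rw [e1, e0, sub_zero, div_one, ← sub_re, ← sub_mul] at hc'
  rw [← hc']
  have h3 := hF.le_deriv_re (hpm c hcI).1
  have h4 := hF.anti (hpm c hcI).1.1 ((hpm c hcI).1.1.trans_le (hpm c hcI).2) (hpm c hcI).2
  have h5 : 3 / 4 * γ T ≤ (deriv F (p c)).re := by linarith
  gcongr

lemma injOn (hF : CuspExp F γ) : InjOn F strip := by
  intro s hs t ht h
  have h1 := hF.mono hs ht (le_max_left s.re t.re) (le_max_right _ _)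
  rw [h, sub_self, zero_mul, zero_re] at h1
  have h2 := hF.pos (max s.re t.re) (hs.1.trans_le (le_max_left _ _))
  by_contra hne
  have : 0 < ‖s - t‖ := norm_pos_iff.2 (sub_ne_zero.2 hne)
  have : 0 < 3 / 4 * γ (max s.re t.re) * ‖s - t‖ ^ 2 := by positivity
  linarith

lemma real_mono (hF : CuspExp F γ) {t t' T : ℝ} (ht : -1 < t) (htt : t ≤ t') (hT : t' ≤ T) :
    3 / 4 * γ T * (t' - t) ≤ (F t').re - (F t).re := by
  rcases htt.eq_or_lt with rfl | hlt
  · simp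
  have h1 := hF.mono (T := T) (ofReal_mem_strip (ht.trans hlt)) (ofReal_mem_strip ht) (by simpa)
    (by simpa using htt.trans hT)
  rw [← ofReal_sub, conj_ofReal, re_mul_ofReal, Complex.norm_real, Real.norm_eq_abs, sq_abs,
    sub_re] at h1
  have : 0 < t' - t := by linarith
  nlinarith

end CuspExp

/-! ### The exponential coordinate on the disc -/

/-- The coordinate `ψ(s) = 1 - e^{-s}`, which maps `dom` onto the disc. -/
def psi (s : ℂ) : ℂ := 1 - exp (-s)

/-- The image of the disc under `z ↦ -log (1 - z)`. -/
def dom : Set ℂ := {s | |s.im| < Real.pi / 2 ∧ psi s ∈ uD}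

lemma psi_hasDerivAt (s : ℂ) : HasDerivAt psi (exp (-s)) s := by
  have := ((hasDerivAt_neg s).cexp).const_sub 1
  refine this.congr_deriv (by ring)

lemma one_sub_psi_normSq (s : ℂ) : ‖psi s‖ ^ 2 =
    1 - Real.exp (-s.re) * (2 * Real.cos s.im - Real.exp (-s.re)) := by
  rw [← Complex.normSq_eq_norm_sq, psi, Complex.normSq_apply]
  simp only [sub_re, sub_im, one_re, one_im, exp_re, exp_im, neg_re, neg_im, Real.cos_neg,
    Real.sin_neg]
  linear_combination (Real.exp (-s.re)) ^ 2 * (Real.sin_sq_add_cos_sq s.im)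

lemma psi_mem {s : ℂ} (h : Real.exp (-s.re) < 2 * Real.cos s.im) : psi s ∈ uD := by
  rw [mem_uD]
  have h1 := one_sub_psi_normSq s
  have h2 : 0 < Real.exp (-s.re) * (2 * Real.cos s.im - Real.exp (-s.re)) :=
    mul_pos (Real.exp_pos _) (by linarith)
  exact lt_of_pow_lt_pow_left₀ 2 zero_le_one (by linarith)

lemma dom_isOpen : IsOpen dom := by
  have h1 : IsOpen {s : ℂ | |s.im| < Real.pi / 2} :=
    isOpen_lt Complex.continuous_im.abs continuous_const
  have h2 : Continuous psi := continuous_iff_continuousAt.2 fun s => (psi_hasDerivAt s).continuousAt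
  exact h1.inter (uD_isOpen.preimage h2)

lemma dom_re {s : ℂ} (hs : s ∈ dom) : -(7 / 10) < s.re := by
  have h1 := one_sub_psi_normSq s
  have h2 := mem_uD.1 hs.2
  have h3 : ‖psi s‖ ^ 2 < 1 := by nlinarith [norm_nonneg (psi s)]
  have h4 : 0 < Real.exp (-s.re) * (2 * Real.cos s.im - Real.exp (-s.re)) := by linarith
  have h5 : 0 < 2 * Real.cos s.im - Real.exp (-s.re) := (pos_iff_pos_of_mul_pos h4).1 (Real.exp_pos _)
  have h6 : Real.exp (-s.re) < 2 := by linarith [Real.cos_le_one s.im]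
  have h7 : -s.re < Real.log 2 := (Real.lt_log_iff_exp_lt (by norm_num)).2 h6
  linarith [Real.log_two_lt_d9]

lemma dom_subset_strip : dom ⊆ strip := fun s hs =>
  ⟨by linarith [dom_re hs], by linarith [hs.1, Real.pi_lt_d2]⟩

lemma mem_dom {s : ℂ} (h0 : 0 < s.re) (h1 : |s.im| ≤ 1) : s ∈ dom := by
  refine ⟨by linarith [Real.pi_gt_three], psi_mem ?_⟩
  have h2 := Real.one_sub_sq_div_two_le_cos (x := s.im)
  have h3 : s.im ^ 2 ≤ 1 := by
    rw [← sq_abs]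
    nlinarith [abs_nonneg s.im]
  have h4 : Real.exp (-s.re) < 1 := Real.exp_lt_one_iff.2 (by linarith)
  linarith

lemma psi_log {z : ℂ} (hz : z ∈ uD) : -log (1 - z) ∈ dom ∧ psi (-log (1 - z)) = z := by
  have h1 := mem_uD.1 hz
  have hre : 0 < (1 - z).re := by
    have := re_le_norm z
    simp only [sub_re, one_re]
    linarith
  have h0 : 1 - z ≠ 0 := by
    intro h
    rw [h] at hre
    simp at hre
  have e : psi (-log (1 - z)) = z := by
    rw [psi, neg_neg, exp_log h0]
    ring
  refine ⟨⟨?_, by rw [e]; exact hz⟩, e⟩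
  rw [neg_im, abs_neg, log_im]
  exact abs_arg_lt_pi_div_two_iff.2 (Or.inl hre)

lemma log_psi {s : ℂ} (hs : s ∈ dom) : -log (1 - psi s) = s := by
  have h := abs_lt.1 hs.1
  rw [psi, sub_sub_cancel, log_exp]
  · ring
  · rw [neg_im]; linarith [Real.pi_pos]
  · rw [neg_im]; linarith [Real.pi_pos]

lemma psi_injOn : InjOn psi dom := by
  intro a ha b hb h
  rw [← log_psi ha, ← log_psi hb, h]

lemma psi_image : psi '' dom = uD := by
  apply Subset.antisymm
  · rintro _ ⟨s, hs, rfl⟩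
    exact hs.2
  · intro z hz
    exact ⟨_, (psi_log hz).1, (psi_log hz).2⟩

/-! ### The symbol attached to a cusp exponent -/

/-- The symbol `φ(z) = 1 - exp (-F (-log (1 - z)))`, that is `φ ∘ ψ = ψ ∘ F`. -/
def cuspMap (F : ℂ → ℂ) (z : ℂ) : ℂ := psi (F (-log (1 - z)))

namespace CuspExp

variable {F : ℂ → ℂ} {γ : ℝ → ℝ}

lemma sub_re_le (hF : CuspExp F γ) {τ : ℝ} (hτ : -1 < τ) {s : ℂ} (hs : s ∈ dom) (h : τ ≤ s.re) :
    ‖F s - F s.re‖ ≤ 2 * γ τ := by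
  have h1 := hF.lip hτ (dom_subset_strip hs) (ofReal_mem_strip (hτ.trans_le h)) h (by simpa using h)
  have e : s - (s.re : ℂ) = s.im * I := by
    apply Complex.ext <;> simp
  rw [e, norm_mul, norm_I, mul_one, Complex.norm_real, Real.norm_eq_abs] at h1
  have h2 := hs.1
  have h3 := hF.pos τ hτ
  nlinarith [Real.pi_lt_d2]

lemma im_le (hF : CuspExp F γ) {τ : ℝ} (hτ : -1 < τ) {s : ℂ} (hs : s ∈ dom) (h : τ ≤ s.re) :
    |(F s).im| ≤ 2 * γ τ := by
  have h1 := (abs_im_le_norm _).trans (hF.sub_re_le hτ hs h)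
  rwa [sub_im, hF.real _ (hτ.trans_le h), sub_zero] at h1

lemma im_le' (hF : CuspExp F γ) {s : ℂ} (hs : s ∈ dom) : |(F s).im| ≤ 1 / 50 := by
  have h1 := (dom_subset_strip hs).1
  have := hF.im_le h1 hs le_rfl
  linarith [hF.small _ h1]

lemma re_ge (hF : CuspExp F γ) {s : ℂ} (hs : s ∈ dom) : -(3 / 100) ≤ (F s).re := by
  have h1 := (dom_subset_strip hs).1
  have h2 := (abs_re_le_norm _).trans (hF.sub_re_le h1 hs le_rfl)
  rw [sub_re] at h2
  have h3 : -(1 / 100) ≤ (F s.re).re := by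
    have hz : (F (0 : ℝ)).re = 0 := by rw [ofReal_zero, hF.zero, zero_re]
    rcases le_total 0 s.re with h | h
    · have := hF.real_mono (t := 0) (t' := s.re) (T := s.re) (by norm_num) h le_rfl
      have h4 := hF.pos s.re h1
      rw [hz] at this
      nlinarith
    · have h4 := hF.lip h1 (ofReal_mem_strip h1) (ofReal_mem_strip (t := 0) (by norm_num))
        (by simp) (by simpa using h)
      have h5 := (abs_re_le_norm _).trans h4
      rw [sub_re, hz, sub_zero, ofReal_zero, sub_zero, Complex.norm_real, Real.norm_eq_abs] at h5
      have h6 : |s.re| ≤ 7 / 10 := by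
        rw [abs_le]
        constructor <;> linarith [dom_re hs]
      have h7 := (abs_le.1 h5).1
      have h8 := hF.small _ h1
      have h9 := hF.pos _ h1
      nlinarith [abs_nonneg s.re]
  have h4 := (abs_le.1 h2).1
  linarith [hF.small _ h1]

/-- The boundary distance of `ψ (F s)` is comparable to its distance to the point `1`. -/
lemma gap (hF : CuspExp F γ) {s : ℂ} (hs : s ∈ dom) :
    ‖psi (F s)‖ + Real.exp (-(F s).re) / 4 < 1 := by
  have h1 := one_sub_psi_normSq (F s)
  have h2 := hF.im_le' hs
  have h3 := hF.re_ge hs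
  have h4 := Real.one_sub_sq_div_two_le_cos (x := (F s).im)
  have h5 : (F s).im ^ 2 ≤ (1 / 50) ^ 2 := by
    rw [← sq_abs]
    gcongr
  have hexp : Real.exp (-(F s).re) ≤ 11 / 10 := by
    have h6 : Real.exp (-(F s).re) ≤ Real.exp (3 / 100) := Real.exp_le_exp.2 (by linarith)
    have h7 := Real.exp_bound_div_one_sub_of_interval (x := 3 / 100) (by norm_num) (by norm_num)
    norm_num at h7
    linarith
  have hp := Real.exp_pos (-(F s).re)
  set ρ := Real.exp (-(F s).re)
  have h6 : ‖psi (F s)‖ ^ 2 ≤ 1 - ρ * (8 / 10) := by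
    rw [h1]
    nlinarith
  by_contra hcon
  push Not at hcon
  have h7 : 1 - ρ / 4 ≤ ‖psi (F s)‖ := by linarith
  have h8 : (1 - ρ / 4) ^ 2 ≤ ‖psi (F s)‖ ^ 2 := by
    have : 0 ≤ 1 - ρ / 4 := by linarith
    gcongr
  nlinarith

lemma psi_F_mem (hF : CuspExp F γ) {s : ℂ} (hs : s ∈ dom) : psi (F s) ∈ uD := by
  rw [mem_uD]
  linarith [hF.gap hs, Real.exp_pos (-(F s).re)]

lemma cuspMap_psi {s : ℂ} (hs : s ∈ dom) : cuspMap F (psi s) = psi (F s) := by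
  rw [cuspMap, log_psi hs]

lemma cuspMap_mapsTo (hF : CuspExp F γ) : MapsTo (cuspMap F) uD uD := by
  intro z hz
  exact hF.psi_F_mem (psi_log hz).1

lemma cuspMap_differentiableOn (hF : CuspExp F γ) : DifferentiableOn ℂ (cuspMap F) uD := by
  intro z hz
  apply DifferentiableAt.differentiableWithinAt
  have h1 : DifferentiableAt ℂ F (-log (1 - z)) :=
    (hF.hasDerivAt (dom_subset_strip (psi_log hz).1)).differentiableAt
  have h2 : DifferentiableAt ℂ (fun z => -log (1 - z)) z := by
    refine DifferentiableAt.neg (DifferentiableAt.clog (by fun_prop) ?_)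
    refine Or.inl ?_
    have := re_le_norm z
    have h3 := mem_uD.1 hz
    simp only [sub_re, one_re]
    linarith
  exact (psi_hasDerivAt _).differentiableAt.comp z (h1.comp z h2)

lemma cuspMap_zero (hF : CuspExp F γ) : cuspMap F 0 = 0 := by
  simp [cuspMap, psi, hF.zero]

lemma cuspMap_isSchur (hF : CuspExp F γ) : IsSchur (cuspMap F) :=
  ⟨hF.cuspMap_differentiableOn, hF.cuspMap_mapsTo⟩

/-- The Dirichlet integral of `f ∘ φ` in the exponential coordinate. -/
lemma dirE_comp (hF : CuspExp F γ) {f : ℂ → ℂ} (hf : DifferentiableOn ℂ f uD) :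
    dirE (compOp (cuspMap F) f) = ∫⁻ s in dom, ENNReal.ofReal
      (‖deriv f (psi (F s))‖ ^ 2 * (Real.exp (-(F s).re) * ‖deriv F s‖) ^ 2) ∂nA := by
  have h1 := lintegral_image_holo_nA dom_isOpen.measurableSet (fun z _ => psi_hasDerivAt z)
    psi_injOn (fun z => ENNReal.ofReal (‖deriv (compOp (cuspMap F) f) z‖ ^ 2))
  rw [psi_image] at h1
  rw [dirE, h1]
  refine setLIntegral_congr_fun dom_isOpen.measurableSet fun s hs => ?_
  have hd1 : DifferentiableAt ℂ (compOp (cuspMap F) f) (psi s) :=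
    (hf.comp hF.cuspMap_differentiableOn hF.cuspMap_mapsTo).differentiableAt
      (uD_isOpen.mem_nhds hs.2)
  have h2 := hd1.hasDerivAt.comp s (psi_hasDerivAt s)
  have h3 : HasDerivAt (fun s => f (psi (F s)))
      (deriv f (psi (F s)) * (exp (-F s) * deriv F s)) s := by
    have hd2 := (hf.differentiableAt (uD_isOpen.mem_nhds (hF.psi_F_mem hs))).hasDerivAt
    exact hd2.comp s ((psi_hasDerivAt (F s)).comp s (hF.hasDerivAt (dom_subset_strip hs)))
  have h4 : HasDerivAt (compOp (cuspMap F) f ∘ psi)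
      (deriv f (psi (F s)) * (exp (-F s) * deriv F s)) s := by
    refine h3.congr_of_eventuallyEq ?_
    filter_upwards [dom_isOpen.mem_nhds hs] with t ht
    simp [compOp, cuspMap_psi ht]
  have h5 := h2.unique h4
  rw [← ENNReal.ofReal_mul (by positivity), ← mul_pow, mul_comm, ← norm_mul, h5, norm_mul, norm_mul,
    norm_exp, neg_re, mul_pow]

end CuspExp

/-! ### Upper bounds for the approximation numbers -/

lemma volume_box (a b c d : ℝ) :
    volume (Icc a b ×ℂ Icc c d) = ENNReal.ofReal (b - a) * ENNReal.ofReal (d - c) := by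
  have : Icc a b ×ℂ Icc c d = measurableEquivRealProd ⁻¹' (Icc a b ×ˢ Icc c d) := rfl
  rw [this, volume_preserving_equiv_real_prod.measure_preimage
    (measurableSet_Icc.prod measurableSet_Icc).nullMeasurableSet, Measure.volume_eq_prod,
    Measure.prod_prod, Real.volume_Icc, Real.volume_Icc]

lemma nA_le_volume (S : Set ℂ) : nA S ≤ volume S := by
  rw [nA, Measure.smul_apply, smul_eq_mul]
  refine mul_le_of_le_one_left zero_le ?_
  rw [ENNReal.inv_le_one, ← ENNReal.ofReal_one]
  exact ENNReal.ofReal_le_ofReal (by linarith [Real.pi_gt_three])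

instance nA_sFinite : SFinite nA := by
  unfold nA
  infer_instance

lemma psi_continuous : Continuous psi :=
  continuous_iff_continuousAt.2 fun s => (psi_hasDerivAt s).continuousAt

lemma norm_one_sub_psi (v : ℂ) : ‖1 - psi v‖ = Real.exp (-v.re) := by
  rw [psi, sub_sub_cancel, norm_exp, neg_re]

namespace CuspExp

variable {F : ℂ → ℂ} {γ : ℝ → ℝ}

/-- The points of `dom` with real part at least `T` which `ψ ∘ F` sends close to a given `u` are mapped by `F` into a
rectangle of width at most `1` and height `4 γ(T)`. -/
lemma nA_image_le (hF : CuspExp F γ) {T : ℝ} (hT : -1 < T) (u : ℂ) :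
    nA (F '' {s ∈ dom ∩ {s | T ≤ s.re} | ‖u - psi (F s)‖ < Real.exp (-(F s).re) / 4}) ≤
      ENNReal.ofReal (4 * γ T) := by
  set d := ‖1 - u‖ with hd
  have hsub : F '' {s ∈ dom ∩ {s | T ≤ s.re} | ‖u - psi (F s)‖ < Real.exp (-(F s).re) / 4} ⊆
      Icc (-Real.log (4 * d / 3)) (-Real.log (4 * d / 5)) ×ℂ Icc (-(2 * γ T)) (2 * γ T) := by
    rintro _ ⟨s, ⟨⟨hs, hsT⟩, hsu⟩, rfl⟩
    have h1 := norm_one_sub_psi (F s)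
    have h2 : |d - Real.exp (-(F s).re)| < Real.exp (-(F s).re) / 4 := by
      rw [← h1] at hsu ⊢
      refine lt_of_le_of_lt (abs_norm_sub_norm_le _ _) ?_
      rw [show 1 - u - (1 - psi (F s)) = -(u - psi (F s)) by ring, norm_neg]
      exact hsu
    rw [abs_lt] at h2
    have hρ := Real.exp_pos (-(F s).re)
    refine ⟨⟨?_, ?_⟩, abs_le.1 (hF.im_le hT hs hsT)⟩
    · have : -(F s).re ≤ Real.log (4 * d / 3) :=
        (Real.le_log_iff_exp_le (by linarith)).2 (by linarith)
      change _ ≤ (F s).re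
      linarith
    · have : Real.log (4 * d / 5) ≤ -(F s).re :=
        (Real.log_le_iff_le_exp (by linarith)).2 (by linarith)
      change (F s).re ≤ _
      linarith
  refine (measure_mono hsub).trans ((nA_le_volume _).trans ?_)
  have hγ := hF.pos T hT
  rw [volume_box, ← ENNReal.ofReal_mul' (by linarith)]
  apply ENNReal.ofReal_le_ofReal
  have hlog : -Real.log (4 * d / 5) - -Real.log (4 * d / 3) ≤ 1 := by
    by_cases h0 : d = 0
    · simp [h0]
    have hd0 : 0 < d := lt_of_le_of_ne (norm_nonneg _) (Ne.symm h0)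
    have e : -Real.log (4 * d / 5) - -Real.log (4 * d / 3) = Real.log (5 / 3) := by
      rw [neg_sub_neg, ← Real.log_div (by positivity) (by positivity)]
      congr 1
      field_simp
    rw [e]
    linarith [Real.log_le_sub_one_of_pos (show (0 : ℝ) < 5 / 3 by norm_num)]
  nlinarith

/-- The tail estimate: the part of the Dirichlet integral of `f ∘ φ` near the tip of the cusp. -/
lemma tail (hF : CuspExp F γ) {T : ℝ} (hT : -1 < T) {f : ℂ → ℂ} (hf : DifferentiableOn ℂ f uD) :
    ∫⁻ s in dom ∩ {s | T ≤ s.re}, ENNReal.ofReal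
      (‖deriv f (psi (F s))‖ ^ 2 * (Real.exp (-(F s).re) * ‖deriv F s‖) ^ 2) ∂nA ≤
      ENNReal.ofReal (64 * γ T) * dirE f := by
  set W : Set ℂ := dom ∩ {s | T ≤ s.re} with hW
  have hWm : MeasurableSet W :=
    dom_isOpen.measurableSet.inter (measurableSet_le measurable_const Complex.measurable_re)
  have hFm := hF.meas
  have hψm : Measurable psi := psi_continuous.measurable
  have hρm : Measurable fun s => Real.exp (-(F s).re) / 4 := by fun_prop
  have hKu : ∀ u, MeasurableSet {s | ‖u - psi (F s)‖ < Real.exp (-(F s).re) / 4} := fun u =>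
    measurableSet_lt (by fun_prop) hρm
  set K : Set (ℂ × ℂ) := {p | ‖p.2 - psi (F p.1)‖ < Real.exp (-(F p.1).re) / 4} with hK
  have hKm : MeasurableSet K := measurableSet_lt (by fun_prop) (hρm.comp measurable_fst)
  set k : ℂ → ℂ → ℝ≥0∞ := fun s u => K.indicator (fun p =>
    ENNReal.ofReal (16 * ‖deriv F p.1‖ ^ 2) * ENNReal.ofReal (‖deriv f p.2‖ ^ 2)) (s, u) with hk
  have hkm : Measurable (Function.uncurry k) := by
    have h1 : Measurable (deriv F) := measurable_deriv F
    have h2 : Measurable (deriv f) := measurable_deriv f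
    exact Measurable.indicator (by fun_prop) hKm
  -- the sub-mean value property on a disc of radius comparable to the boundary distance
  have step1 : ∀ s ∈ W, ENNReal.ofReal
      (‖deriv f (psi (F s))‖ ^ 2 * (Real.exp (-(F s).re) * ‖deriv F s‖) ^ 2) ≤
      ∫⁻ u in uD, k s u ∂nA := by
    intro s hs
    have hρ := Real.exp_pos (-(F s).re)
    set ρ := Real.exp (-(F s).re) with hρdef
    have hsub : ball (psi (F s)) (ρ / 4) ⊆ uD := by
      intro u hu
      rw [mem_uD]
      have h1 := hF.gap hs.1
      have h2 := norm_le_norm_add_norm_sub' u (psi (F s))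
      rw [mem_ball, dist_eq_norm] at hu
      linarith
    have h1 := subMean (show 0 < ρ / 4 by positivity) ((hf.deriv uD_isOpen).mono hsub)
    have h2 : ∫⁻ u in uD, k s u ∂nA = ENNReal.ofReal (16 * ‖deriv F s‖ ^ 2) *
        ∫⁻ u in ball (psi (F s)) (ρ / 4), ENNReal.ofReal (‖deriv f u‖ ^ 2) ∂nA := by
      rw [← lintegral_const_mul _ (by
        have h2 : Measurable (deriv f) := measurable_deriv f
        fun_prop)]
      have e : ∀ u, k s u = (ball (psi (F s)) (ρ / 4)).indicator (fun u =>
          ENNReal.ofReal (16 * ‖deriv F s‖ ^ 2) * ENNReal.ofReal (‖deriv f u‖ ^ 2)) u := by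
        intro u
        simp only [hk, hK, indicator, mem_ball, dist_eq_norm, mem_ofPred_eq, hρdef]
      simp_rw [e]
      rw [lintegral_indicator measurableSet_ball, Measure.restrict_restrict measurableSet_ball,
        inter_eq_self_of_subset_left hsub]
    rw [h2]
    refine le_trans (le_of_eq ?_) (mul_le_mul_right h1 _)
    rw [← ENNReal.ofReal_mul (by positivity), ← ENNReal.ofReal_mul (by positivity)]
    congr 1
    ring
  refine (setLIntegral_mono' hWm step1).trans ?_
  rw [lintegral_lintegral_swap hkm.aemeasurable, dirE,
    ← lintegral_const_mul _ (by
        have h2 : Measurable (deriv f) := measurable_deriv f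
        fun_prop)]
  refine lintegral_mono fun u => ?_
  set S : Set ℂ := {s ∈ W | ‖u - psi (F s)‖ < Real.exp (-(F s).re) / 4} with hS
  have hSm : MeasurableSet S := hWm.inter (hKu u)
  have e1 : ∫⁻ s in W, k s u ∂nA = ∫⁻ s in S,
      ENNReal.ofReal (‖deriv F s‖ ^ 2) * (16 * ENNReal.ofReal (‖deriv f u‖ ^ 2)) ∂nA := by
    have e : ∀ s, k s u = {s | ‖u - psi (F s)‖ < Real.exp (-(F s).re) / 4}.indicator (fun s =>
        ENNReal.ofReal (‖deriv F s‖ ^ 2) * (16 * ENNReal.ofReal (‖deriv f u‖ ^ 2))) s := by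
      intro s
      simp only [hk, hK, indicator, mem_ofPred_eq]
      rw [ENNReal.ofReal_mul (by norm_num)]
      simp only [ENNReal.ofReal_ofNat]
      congr 1
      ring
    simp_rw [e]
    rw [lintegral_indicator (hKu u), Measure.restrict_restrict (hKu u), inter_comm]
    rfl
  have hSs : S ⊆ strip := fun s hs => dom_subset_strip hs.1.1
  rw [e1, ← lintegral_image_holo_nA hSm (fun z hz => hF.hasDerivAt (hSs hz)) (hF.injOn.mono hSs)
    (fun _ => 16 * ENNReal.ofReal (‖deriv f u‖ ^ 2)), setLIntegral_const]
  calc 16 * ENNReal.ofReal (‖deriv f u‖ ^ 2) * nA (F '' S)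
      ≤ 16 * ENNReal.ofReal (‖deriv f u‖ ^ 2) * ENNReal.ofReal (4 * γ T) := by
        gcongr
        exact hF.nA_image_le hT u
    _ = _ := by
        rw [show (64 : ℝ) * γ T = 16 * (4 * γ T) by ring, ENNReal.ofReal_mul (by norm_num) (p := 16)]
        simp only [ENNReal.ofReal_ofNat]
        ring

/-- The centres `1 - e^{-k/16}` of the conformal discs covering the image of the symbol. -/
def centre (k : ℕ) : ℝ := 1 - Real.exp (-(k / 16 : ℝ))

lemma centre_abs (k : ℕ) : |centre k| = centre k := by
  rw [abs_of_nonneg]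
  have : Real.exp (-(k / 16 : ℝ)) ≤ 1 := Real.exp_le_one_iff.2 (by
    have : (0 : ℝ) ≤ k / 16 := by positivity
    linarith)
  unfold centre
  linarith

lemma centre_lt (k : ℕ) : |centre k| < 1 := by
  rw [centre_abs]
  unfold centre
  linarith [Real.exp_pos (-(k / 16 : ℝ))]

/-- The part of the image of the symbol away from the tip is covered by discs of pseudohyperbolic
radius `1/4` about the `centre k`. -/
lemma exists_centre (hF : CuspExp F γ) {T : ℝ} {N : ℕ}
    (hN : 16 * ((F T).re + 1) ≤ N) {s : ℂ} (hs : s ∈ dom) (hsT : s.re < T) :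
    ∃ k ≤ N, ‖mob (centre k) (psi (F s))‖ ≤ 1 / 4 ∧
      Real.exp (-(F s).re) ≤ 2 * (1 - |centre k|) := by
  have hs1 := (dom_subset_strip hs).1
  have hx0 := hF.re_ge hs
  have hy := hF.im_le' hs
  have hx1 : (F s).re ≤ (F T).re + 1 / 50 := by
    have h1 := (abs_le.1 ((abs_re_le_norm _).trans (hF.sub_re_le hs1 hs le_rfl))).2
    have h2 := hF.real_mono (T := T) hs1 hsT.le le_rfl
    have h3 := hF.pos T (by linarith)
    rw [sub_re] at h1
    nlinarith [hF.small _ hs1]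
  obtain ⟨k, hkN, hk⟩ : ∃ k : ℕ, k ≤ N ∧ |(F s).re - k / 16| ≤ 1 / 16 := by
    rcases le_total 0 (F s).re with h | h
    · refine ⟨⌊16 * (F s).re⌋₊, ?_, ?_⟩
      · have h1 := Nat.floor_le (show 0 ≤ 16 * (F s).re by linarith)
        have : ((⌊16 * (F s).re⌋₊ : ℕ) : ℝ) ≤ N := by linarith
        exact_mod_cast this
      · have h1 := Nat.floor_le (show 0 ≤ 16 * (F s).re by linarith)
        have h2 := Nat.lt_floor_add_one (16 * (F s).re)
        rw [abs_le]
        constructor <;> linarith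
    · refine ⟨0, Nat.zero_le _, ?_⟩
      rw [abs_le]
      constructor <;> push_cast <;> linarith
  refine ⟨k, hkN, ?_, ?_⟩
  · set δ : ℂ := F s - ((k / 16 : ℝ) : ℂ) with hδ
    have hδn : ‖δ‖ ≤ 1 / 8 := by
      have h1 := norm_le_abs_re_add_abs_im δ
      rw [hδ, sub_re, sub_im, ofReal_re, ofReal_im, sub_zero] at h1
      linarith
    have e1 : psi (F s) - centre k = -(Real.exp (-(k / 16 : ℝ)) * (exp (-δ) - 1)) := by
      have : exp (-F s) = exp (((-(k / 16) : ℝ) : ℂ)) * exp (-δ) := by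
        rw [← exp_add, hδ]
        congr 1
        push_cast
        ring
      rw [psi, this, centre]
      push_cast
      ring
    have h2 : ‖psi (F s) - centre k‖ ≤ Real.exp (-(k / 16 : ℝ)) * (1 / 4) := by
      rw [e1, norm_neg, norm_mul, Complex.norm_real, Real.norm_of_nonneg (Real.exp_pos _).le]
      have h3 := norm_exp_sub_one_le (x := -δ) (by rw [norm_neg]; linarith)
      rw [norm_neg] at h3
      gcongr
      linarith
    have h3 := mob_den_lower (centre k) (hF.psi_F_mem hs)
    have h4 : 1 - |centre k| = Real.exp (-(k / 16 : ℝ)) := by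
      rw [centre_abs, centre]
      ring
    rw [h4] at h3
    have h5 := Real.exp_pos (-(k / 16 : ℝ))
    rw [mob, norm_div, div_le_iff₀ (by linarith)]
    linarith
  · have h4 : 1 - |centre k| = Real.exp (-(k / 16 : ℝ)) := by
      rw [centre_abs, centre]
      ring
    rw [h4]
    have h1 : Real.exp (-(F s).re) ≤ Real.exp (-(k / 16 : ℝ)) * Real.exp (1 / 16) := by
      rw [← Real.exp_add]
      apply Real.exp_le_exp.2
      linarith [(abs_le.1 hk).1]
    have h2 := Real.exp_bound_div_one_sub_of_interval (x := 1 / 16) (by norm_num) (by norm_num)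
    norm_num at h2
    nlinarith [Real.exp_pos (-(k / 16 : ℝ))]

/-- The head estimate: the part of the Dirichlet integral of `f ∘ φ` away from the tip of the cusp,
for `f` orthogonal to sufficiently many elements. -/
lemma head (hF : CuspExp F γ) {T : ℝ} {N m : ℕ} (hN : 16 * ((F T).re + 1) ≤ N)
    (f : dStar) (hf : ∀ k ≤ N, ∀ j < m,
      inner ℂ (toL2 (kel (centre k) (centre_lt k) (j + 1))) (toL2 f) = 0) :
    ∫⁻ s in dom ∩ {s | s.re < T}, ENNReal.ofReal
      (‖deriv (f : ℂ → ℂ) (psi (F s))‖ ^ 2 * (Real.exp (-(F s).re) * ‖deriv F s‖) ^ 2) ∂nA ≤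
      ENNReal.ofReal (4 * (T + 1) * (1 / 4) ^ m) * dirE f := by
  have hm : MeasurableSet (dom ∩ {s : ℂ | s.re < T}) :=
    dom_isOpen.measurableSet.inter (measurableSet_lt Complex.measurable_re measurable_const)
  have h1 : ∀ s ∈ dom ∩ {s : ℂ | s.re < T}, ENNReal.ofReal
      (‖deriv (f : ℂ → ℂ) (psi (F s))‖ ^ 2 * (Real.exp (-(F s).re) * ‖deriv F s‖) ^ 2) ≤
      ENNReal.ofReal ((1 / 4) ^ m) * dirE f := by
    rintro s ⟨hs, hsT⟩
    obtain ⟨k, hkN, hk1, hk2⟩ := hF.exists_centre hN hs hsT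
    have h2 := local_est (centre_lt k) m f (hf k hkN) (hF.psi_F_mem hs) hk1
    have h3 := hF.deriv_le (dom_subset_strip hs)
    have h4 := hF.small _ (dom_subset_strip hs).1
    have h5 : 0 < 1 - |centre k| := by linarith [centre_lt k]
    rw [ENNReal.ofReal_mul (by positivity)]
    have h6 : ENNReal.ofReal ((Real.exp (-(F s).re) * ‖deriv F s‖) ^ 2) ≤
        ENNReal.ofReal ((2 * (1 - |centre k|) * (1 / 50)) ^ 2) := by
      apply ENNReal.ofReal_le_ofReal
      gcongr
      linarith
    refine (mul_le_mul' h2 h6).trans ?_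
    rw [mul_right_comm, ← ENNReal.ofReal_mul (by positivity)]
    gcongr
    have h7 : 16 * (1 / 4) ^ m * (2 / (1 - |centre k|)) ^ 2 * (2 * (1 - |centre k|) * (1 / 50)) ^ 2
        = (1 / 4) ^ m * (16 * 16 / 2500) := by
      field_simp
      norm_num
    rw [h7]
    have : (0 : ℝ) < (1 / 4) ^ m := by positivity
    linarith
  refine (setLIntegral_mono' hm h1).trans ?_
  rw [setLIntegral_const, mul_right_comm]
  gcongr
  have h2 : nA (dom ∩ {s : ℂ | s.re < T}) ≤ ENNReal.ofReal (4 * (T + 1)) := by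
    have hsub : dom ∩ {s : ℂ | s.re < T} ⊆ Icc (-1) T ×ℂ Icc (-2) 2 := by
      rintro s ⟨hs, hsT⟩
      have := dom_subset_strip hs
      exact ⟨⟨this.1.le, le_of_lt hsT⟩, abs_le.1 this.2.le⟩
    refine (measure_mono hsub).trans ((nA_le_volume _).trans ?_)
    rw [volume_box, ← ENNReal.ofReal_mul' (by norm_num)]
    apply ENNReal.ofReal_le_ofReal
    linarith
  rw [mul_comm (4 * (T + 1)), ENNReal.ofReal_mul (by positivity)]
  gcongr

lemma eDNormSq_comp (hF : CuspExp F γ) {f : ℂ → ℂ} (hf : f 0 = 0) :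
    eDNormSq (compOp (cuspMap F) f) = dirE (compOp (cuspMap F) f) :=
  eDNormSq_eq_of_zero (by simp [compOp, hF.cuspMap_zero, hf])

lemma bound (hF : CuspExp F γ) {f : ℂ → ℂ} (hf : DifferentiableOn ℂ f uD) :
    dirE (compOp (cuspMap F) f) ≤ 1 ^ 2 * dirE f := by
  have h := hF.tail (T := -(7 / 10)) (by norm_num) hf
  have e : dom ∩ {s : ℂ | -(7 / 10) ≤ s.re} = dom :=
    inter_eq_self_of_subset_left fun s hs => (dom_re hs).le
  rw [e, ← hF.dirE_comp hf] at h
  refine h.trans ?_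
  gcongr
  rw [one_pow, ← ENNReal.ofReal_one]
  apply ENNReal.ofReal_le_ofReal
  linarith [hF.small (-(7 / 10)) (by norm_num)]

lemma isBounded (hF : CuspExp F γ) : IsBoundedOpOn MemDStar eDNormSq (compOp (cuspMap F)) := by
  constructor
  · intro f hf
    rw [memDStar_iff] at hf ⊢
    refine ⟨hf.1.comp hF.cuspMap_differentiableOn hF.cuspMap_mapsTo, ?_, ?_⟩
    · refine (hF.bound hf.1).trans_lt ?_
      rw [one_pow, one_mul]
      exact hf.2.1
    · simp [compOp, hF.cuspMap_zero, hf.2.2]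
  · refine ne_top_of_le_ne_top ENNReal.one_ne_top (sInf_le fun f hf => ?_)
    rw [memDStar_iff] at hf
    rw [hF.eDNormSq_comp hf.2.2, eDNormSq_eq_of_zero hf.2.2]
    exact hF.bound hf.1

lemma approx_one_le (hF : CuspExp F γ) :
    eApproxNum MemDStar eDNormSq (compOp (cuspMap F)) 1 ≤ 1 := by
  have := approx_upper (φ := cuspMap F) (ι := Fin 0) (fun i => i.elim0) 1 (fun f _ => by
    have hf := mem_dStar.1 f.2
    rw [hF.eDNormSq_comp hf.2.2, eDNormSq_eq_of_zero hf.2.2]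
    exact hF.bound hf.1)
  simpa using this

/-- The upper bound for the approximation numbers of `C_φ`. -/
lemma approx_le (hF : CuspExp F γ) {T : ℝ} {N m : ℕ} (hT : 0 ≤ T)
    (hN : 16 * ((F T).re + 1) ≤ N) :
    eApproxNum MemDStar eDNormSq (compOp (cuspMap F)) ((N + 1) * m + 1) ≤
      ENNReal.ofReal (Real.sqrt (64 * γ T + 4 * (T + 1) * (1 / 4) ^ m)) := by
  have hγ := hF.pos T (by linarith)
  have h := approx_upper (φ := cuspMap F) (ι := Fin (N + 1) × Fin m)
    (fun p => kel (centre p.1) (centre_lt p.1) (p.2 + 1))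
    (ENNReal.ofReal (Real.sqrt (64 * γ T + 4 * (T + 1) * (1 / 4) ^ m))) ?_
  · simpa using h
  intro f hperp
  have hf := mem_dStar.1 f.2
  rw [hF.eDNormSq_comp hf.2.2, eDNormSq_eq_of_zero hf.2.2, hF.dirE_comp hf.1,
    ← ENNReal.ofReal_pow (Real.sqrt_nonneg _), Real.sq_sqrt (by positivity),
    ENNReal.ofReal_add (by positivity) (by positivity), add_mul]
  have e : dom = (dom ∩ {s | T ≤ s.re}) ∪ (dom ∩ {s | s.re < T}) := by
    ext s
    rcases le_or_gt T s.re with h | h <;> simp [h, not_le.2, not_lt.2]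
  rw [e]
  refine (lintegral_union_le _ _ _).trans (add_le_add (hF.tail (by linarith) hf.1) ?_)
  exact hF.head hN f fun k hk j hj => hperp ⟨⟨k, by omega⟩, ⟨j, hj⟩⟩

end CuspExp

/-! ### Lower bounds for the approximation numbers -/

lemma one_sub_abs_lt {ρ : ℝ} (h0 : 0 < ρ) (h1 : ρ ≤ 1 / 2) : |1 - ρ| < 1 := by
  rw [abs_lt]
  constructor <;> linarith

lemma sq_sum_le {n : ℕ} (α : Fin n → ℂ) : (∑ i, ‖α i‖) ^ 2 ≤ n * ∑ i, ‖α i‖ ^ 2 := by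
  have := sq_sum_le_card_mul_sum_sq (s := Finset.univ) (f := fun i => ‖α i‖)
  simpa using this

/-- The functions `b_r`, for points `r = 1 - ρ` tending fast to `1`, are almost orthonormal. -/
lemma gram_bound {n : ℕ} {ρ : Fin n → ℝ} (h0 : ∀ i, 0 < ρ i) (h1 : ∀ i, ρ i ≤ 1 / 2) {ε : ℝ}
    (hε : 0 ≤ ε) (hsep : ∀ i j, i ≠ j → ρ i ≤ ε * ρ j ∨ ρ j ≤ ε * ρ i) (hn : 4 * ε * n ≤ 1)
    (α : Fin n → ℂ) :
    ‖toL2 (∑ i, α i • kel (1 - ρ i) (one_sub_abs_lt (h0 i) (h1 i)) 1)‖ ^ 2 ≤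
      2 * ∑ i, ‖α i‖ ^ 2 := by
  set v : Fin n → Lp ℂ 2 (nA.restrict uD) :=
    fun i => toL2 (kel (1 - ρ i) (one_sub_abs_lt (h0 i) (h1 i)) 1) with hv
  have hoff : ∀ i j, ‖(inner ℂ (v i) (v j) : ℂ)‖ ≤ (if i = j then 1 else 0) + 4 * ε := by
    intro i j
    rw [hv]
    simp only
    rw [kel_gram, Complex.norm_real, Real.norm_eq_abs]
    have hi := h0 i
    have hj := h0 j
    have hi1 := h1 i
    have hj1 := h1 j
    have hd : 0 < 1 - (1 - ρ i) * (1 - ρ j) := by nlinarith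
    rw [abs_of_nonneg (div_nonneg (mul_nonneg (by nlinarith) (by nlinarith)) (sq_nonneg _)),
      div_le_iff₀ (by positivity)]
    split_ifs with hij
    · subst hij
      have : 0 ≤ 4 * ε * (1 - (1 - ρ i) * (1 - ρ i)) ^ 2 := by positivity
      nlinarith
    · have e1 : (1 - (1 - ρ i) ^ 2) * (1 - (1 - ρ j) ^ 2) ≤ 4 * (ρ i * ρ j) := by
        have e2 : 1 - (1 - ρ i) ^ 2 ≤ 2 * ρ i := by nlinarith
        have e3 : 1 - (1 - ρ j) ^ 2 ≤ 2 * ρ j := by nlinarith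
        have e4 : 0 ≤ 1 - (1 - ρ j) ^ 2 := by nlinarith
        calc _ ≤ (2 * ρ i) * (2 * ρ j) := mul_le_mul e2 e3 e4 (by positivity)
          _ = _ := by ring
      have hdi : ρ i ≤ 1 - (1 - ρ i) * (1 - ρ j) := by nlinarith
      have hdj : ρ j ≤ 1 - (1 - ρ i) * (1 - ρ j) := by nlinarith
      set D := 1 - (1 - ρ i) * (1 - ρ j)
      have e5 : ρ i * ρ j ≤ ε * D ^ 2 := by
        rcases hsep i j hij with h | h
        · calc ρ i * ρ j ≤ (ε * ρ j) * ρ j := by gcongr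
            _ = ε * ρ j ^ 2 := by ring
            _ ≤ ε * D ^ 2 := by gcongr
        · calc ρ i * ρ j ≤ ρ i * (ε * ρ i) := by gcongr
            _ = ε * ρ i ^ 2 := by ring
            _ ≤ ε * D ^ 2 := by gcongr
      linarith
  have e : toL2 (∑ i, α i • kel (1 - ρ i) (one_sub_abs_lt (h0 i) (h1 i)) 1) =
      ∑ i, α i • v i := by
    rw [map_sum]
    simp [hv]
  rw [e]
  have h2 : ((‖∑ i, α i • v i‖ ^ 2 : ℝ) : ℂ) =
      ∑ i, ∑ j, (starRingEnd ℂ) (α i) * α j * inner ℂ (v i) (v j) := by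
    have h := inner_self_eq_norm_sq_to_K (𝕜 := ℂ) (∑ i, α i • v i)
    rw [sum_inner] at h
    rw [ofReal_pow]
    refine h.symm.trans ?_
    refine Finset.sum_congr rfl fun i _ => ?_
    rw [inner_sum]
    refine Finset.sum_congr rfl fun j _ => ?_
    rw [inner_smul_left, inner_smul_right]
    ring
  have h3 : ‖∑ i, α i • v i‖ ^ 2 ≤
      ∑ i, ∑ j, ‖α i‖ * ‖α j‖ * ((if i = j then 1 else 0) + 4 * ε) := by
    have h4 : ‖∑ i, α i • v i‖ ^ 2 = ‖((‖∑ i, α i • v i‖ ^ 2 : ℝ) : ℂ)‖ := by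
      rw [Complex.norm_real, Real.norm_of_nonneg (by positivity)]
    rw [h4, h2]
    refine (norm_sum_le _ _).trans (Finset.sum_le_sum fun i _ => ?_)
    refine (norm_sum_le _ _).trans (Finset.sum_le_sum fun j _ => ?_)
    rw [norm_mul, norm_mul, RCLike.norm_conj]
    gcongr
    exact hoff i j
  refine h3.trans ?_
  have h5 : ∑ i, ∑ j, ‖α i‖ * ‖α j‖ * ((if i = j then 1 else 0) + 4 * ε) =
      ∑ i, ‖α i‖ ^ 2 + 4 * ε * (∑ i, ‖α i‖) ^ 2 := by
    simp only [mul_add, Finset.sum_add_distrib, mul_ite, mul_one, mul_zero, Finset.sum_ite_eq,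
      Finset.mem_univ, if_true]
    congr 1
    · exact Finset.sum_congr rfl fun i _ => by ring
    · rw [sq, Finset.sum_mul_sum, Finset.mul_sum]
      refine Finset.sum_congr rfl fun i _ => ?_
      rw [Finset.mul_sum]
      exact Finset.sum_congr rfl fun i _ => by ring
  rw [h5]
  have h6 := sq_sum_le α
  have h7 : 0 ≤ ∑ i, ‖α i‖ ^ 2 := by positivity
  have h8 : 4 * ε * (∑ i, ‖α i‖) ^ 2 ≤ 4 * ε * (n * ∑ i, ‖α i‖ ^ 2) := by gcongr
  nlinarith

lemma kel_sum_deriv {n : ℕ} {r : Fin n → ℝ} (hr : ∀ i, |r i| < 1) (α : Fin n → ℂ) {w : ℂ}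
    (hw : w ∈ uD) :
    deriv ((∑ i, α i • kel (r i) (hr i) 1 : dStar) : ℂ → ℂ) w = ∑ i, α i * mob' (r i) w := by
  have e : ((∑ i, α i • kel (r i) (hr i) 1 : dStar) : ℂ → ℂ) =
      fun z => ∑ i, α i * (kel (r i) (hr i) 1 : ℂ → ℂ) z := by
    ext z
    simp [Finset.sum_apply]
  rw [e]
  refine HasDerivAt.deriv (HasDerivAt.fun_sum fun i _ => HasDerivAt.const_mul _ ?_)
  have := kel_deriv (hr i) 1 hw
  simpa [kel] using this

/-- Near the point `1 - ρ_k`, the derivative of `∑ α_j b_{r_j}` is dominated by its `k`-th term. -/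
lemma point_lower {n : ℕ} {ρ : Fin n → ℝ} (h0 : ∀ i, 0 < ρ i) (h1 : ∀ i, ρ i ≤ 1 / 2) {ε : ℝ}
    (hε : 0 ≤ ε) (hsep : ∀ i j, i ≠ j → ρ i ≤ ε * ρ j ∨ ρ j ≤ ε * ρ i)
    (α : Fin n → ℂ) (k : Fin n) {w δ : ℂ} (hδ : ‖δ‖ ≤ 1 / 16) (hw : 1 - w = ρ k * exp (-δ)) :
    (‖α k‖ ^ 2 / 50 - 169 * ε ^ 2 * n * ∑ i, ‖α i‖ ^ 2) / ρ k ^ 2 ≤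
      ‖∑ i, α i * mob' (1 - ρ i) w‖ ^ 2 := by
  have hk := h0 k
  have hk1 := h1 k
  have hexp : ‖exp (-δ) - 1‖ ≤ 1 / 8 := by
    have := norm_exp_sub_one_le (x := -δ) (by rw [norm_neg]; linarith)
    rw [norm_neg] at this
    linarith
  have hre : 7 / 8 ≤ (exp (-δ)).re := by
    have := (abs_le.1 ((abs_re_le_norm _).trans hexp)).1
    rw [sub_re, one_re] at this
    linarith
  have hnorm : ‖exp (-δ)‖ ≤ 9 / 8 := by
    have := norm_le_norm_add_norm_sub' (exp (-δ)) 1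
    rw [norm_one] at this
    linarith
  have hden : ∀ i, 1 - ((1 - ρ i : ℝ) : ℂ) * w = ρ i + ((1 - ρ i : ℝ) : ℂ) * (ρ k * exp (-δ)) := by
    intro i
    rw [← hw]
    push_cast
    ring
  have hnum : ∀ i, ‖mob' (1 - ρ i) w‖ =
      (ρ i * (2 - ρ i)) / ‖1 - ((1 - ρ i : ℝ) : ℂ) * w‖ ^ 2 := by
    intro i
    rw [mob', norm_div, norm_pow]
    congr 1
    have : (1 : ℂ) - ((1 - ρ i : ℝ) : ℂ) ^ 2 = ((ρ i * (2 - ρ i) : ℝ) : ℂ) := by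
      push_cast
      ring
    rw [this, Complex.norm_real, Real.norm_of_nonneg]
    have := h0 i
    have := h1 i
    nlinarith
  have hlow : ∀ i, ρ i + 7 / 16 * ρ k ≤ ‖1 - ((1 - ρ i : ℝ) : ℂ) * w‖ := by
    intro i
    refine le_trans ?_ (re_le_norm _)
    rw [hden i, ← mul_assoc, ← ofReal_mul, add_re, ofReal_re, re_ofReal_mul]
    have := h1 i
    have h2 : 1 / 2 * ρ k ≤ (1 - ρ i) * ρ k := by gcongr; linarith
    nlinarith
  have hmain : 1 / (5 * ρ k) ≤ ‖mob' (1 - ρ k) w‖ := by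
    have hup : ‖1 - ((1 - ρ k : ℝ) : ℂ) * w‖ ≤ 17 / 8 * ρ k := by
      rw [hden k]
      refine (norm_add_le _ _).trans ?_
      rw [norm_mul, norm_mul, Complex.norm_real, Complex.norm_real, Real.norm_of_nonneg hk.le,
        Real.norm_of_nonneg (by linarith)]
      have : (1 - ρ k) * (ρ k * ‖exp (-δ)‖) ≤ 1 * (ρ k * (9 / 8)) := by
        gcongr
        linarith
      linarith
    have hpos : 0 < ‖1 - ((1 - ρ k : ℝ) : ℂ) * w‖ := lt_of_lt_of_le (by positivity) (hlow k)
    rw [hnum k, div_le_div_iff₀ (by positivity) (by positivity)]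
    have : ‖1 - ((1 - ρ k : ℝ) : ℂ) * w‖ ^ 2 ≤ (17 / 8 * ρ k) ^ 2 := by gcongr
    nlinarith [mul_pos hk hk]
  have hother : ∀ i, i ≠ k → ‖mob' (1 - ρ i) w‖ ≤ 13 * ε / ρ k := by
    intro i hik
    have hi := h0 i
    have hi1 := h1 i
    have hl := hlow i
    have hpos : 0 < ‖1 - ((1 - ρ i : ℝ) : ℂ) * w‖ := lt_of_lt_of_le (by positivity) hl
    rw [hnum i, div_le_div_iff₀ (by positivity) hk]
    set D := ‖1 - ((1 - ρ i : ℝ) : ℂ) * w‖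
    rcases hsep i k hik with h | h
    · have h2 : (7 / 16 * ρ k) ^ 2 ≤ D ^ 2 := by
        gcongr
        linarith
      calc ρ i * (2 - ρ i) * ρ k ≤ (ε * ρ k) * 2 * ρ k := by
            gcongr
            · linarith
            · linarith
        _ ≤ 13 * ε * (7 / 16 * ρ k) ^ 2 := by
            have : 0 ≤ ε * ρ k ^ 2 := by positivity
            nlinarith
        _ ≤ 13 * ε * D ^ 2 := by gcongr
    · have h2 : ρ i ^ 2 ≤ D ^ 2 := by
        gcongr
        linarith
      calc ρ i * (2 - ρ i) * ρ k ≤ ρ i * 2 * (ε * ρ i) := by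
            gcongr
            linarith
        _ = 2 * (ε * ρ i ^ 2) := by ring
        _ ≤ 13 * (ε * ρ i ^ 2) := by
            have : 0 ≤ ε * ρ i ^ 2 := by positivity
            linarith
        _ ≤ 13 * ε * D ^ 2 := by
            rw [mul_assoc]
            gcongr
  set S := ∑ i, α i * mob' (1 - ρ i) w with hS
  set y := 13 * ε / ρ k * ∑ i, ‖α i‖ with hy
  have hy0 : 0 ≤ y := by positivity
  have h2 : ‖α k‖ * (1 / (5 * ρ k)) ≤ ‖S‖ + y := by
    have e1 : α k * mob' (1 - ρ k) w = S - ∑ i ∈ Finset.univ.erase k, α i * mob' (1 - ρ i) w := by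
      rw [hS, ← Finset.add_sum_erase _ _ (Finset.mem_univ k)]
      ring
    have e2 : ‖∑ i ∈ Finset.univ.erase k, α i * mob' (1 - ρ i) w‖ ≤ y := by
      refine (norm_sum_le _ _).trans ?_
      have e3 : ∑ i ∈ Finset.univ.erase k, ‖α i * mob' (1 - ρ i) w‖ ≤
          ∑ i ∈ Finset.univ.erase k, ‖α i‖ * (13 * ε / ρ k) := by
        refine Finset.sum_le_sum fun i hi => ?_
        rw [norm_mul]
        gcongr
        exact hother i (Finset.ne_of_mem_erase hi)
      refine e3.trans ?_
      rw [hy, Finset.mul_sum]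
      refine (Finset.sum_le_sum_of_subset_of_nonneg (Finset.erase_subset _ _)
        fun _ _ _ => by positivity).trans (le_of_eq ?_)
      exact Finset.sum_congr rfl fun i _ => by ring
    calc ‖α k‖ * (1 / (5 * ρ k)) ≤ ‖α k‖ * ‖mob' (1 - ρ k) w‖ := by gcongr
      _ = ‖S - ∑ i ∈ Finset.univ.erase k, α i * mob' (1 - ρ i) w‖ := by rw [← norm_mul, e1]
      _ ≤ ‖S‖ + y := (norm_sub_le _ _).trans (by gcongr)
  have h3 : (‖α k‖ * (1 / (5 * ρ k))) ^ 2 ≤ 2 * ‖S‖ ^ 2 + 2 * y ^ 2 := by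
    calc _ ≤ (‖S‖ + y) ^ 2 := by gcongr
      _ ≤ _ := by nlinarith [sq_nonneg (‖S‖ - y)]
  have h4 : y ^ 2 ≤ (13 * ε / ρ k) ^ 2 * (n * ∑ i, ‖α i‖ ^ 2) := by
    rw [hy, mul_pow]
    gcongr
    exact sq_sum_le α
  have e5 : (‖α k‖ * (1 / (5 * ρ k))) ^ 2 = 2 * ((‖α k‖ ^ 2 / 50) / ρ k ^ 2) := by
    field_simp
    ring
  have e6 : (13 * ε / ρ k) ^ 2 * (n * ∑ i, ‖α i‖ ^ 2) =
      (169 * ε ^ 2 * n * ∑ i, ‖α i‖ ^ 2) / ρ k ^ 2 := by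
    field_simp
    ring
  rw [sub_div]
  linarith

lemma ofReal_sum_le {n : ℕ} (x : Fin n → ℝ) :
    ENNReal.ofReal (∑ i, x i) ≤ ∑ i, ENNReal.ofReal (x i) :=
  Finset.le_sum_of_subadditive _ ENNReal.ofReal_zero.le (fun _ _ => ENNReal.ofReal_add_le) _ _

lemma box_aux {X ρ g D e d : ℝ} (hρ : 0 < ρ) (hg : 0 ≤ g) (h1 : X / ρ ^ 2 ≤ D ^ 2)
    (h2 : 7 / 8 * ρ ≤ e) (h3 : 3 / 4 * g ≤ d) :
    2 / 5 * g ^ 2 * X ≤ D ^ 2 * (e * d) ^ 2 := by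
  by_cases hneg : X ≤ 0
  · refine le_trans ?_ (by positivity : (0 : ℝ) ≤ _)
    exact mul_nonpos_of_nonneg_of_nonpos (by positivity) hneg
  push Not at hneg
  have e1 : X / ρ ^ 2 * ((7 / 8 * ρ) * (3 / 4 * g)) ^ 2 = (7 / 8 * (3 / 4)) ^ 2 * (g ^ 2 * X) := by
    field_simp
  have : 0 ≤ g ^ 2 * X := by positivity
  have he : 0 ≤ e := le_trans (by positivity) h2
  calc 2 / 5 * g ^ 2 * X ≤ X / ρ ^ 2 * ((7 / 8 * ρ) * (3 / 4 * g)) ^ 2 := by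
        rw [e1]
        nlinarith
    _ ≤ _ := by gcongr

namespace CuspExp

variable {F : ℂ → ℂ} {γ : ℝ → ℝ}

set_option maxHeartbeats 1000000 in
/-- The lower bound for the approximation numbers of `C_φ`. -/
lemma le_approx (hF : CuspExp F γ) {T : ℝ} (hT : 1 ≤ T) (hFT : 1 ≤ (F T).re) {n : ℕ} (hn : 0 < n)
    (hnT : n * Real.log (200 * T) ≤ 3 / 4 * γ (2 * T) * T) :
    ENNReal.ofReal (Real.sqrt (γ (2 * T) ^ 2 / (10000 * γ T) / 2)) ≤
      eApproxNum MemDStar eDNormSq (compOp (cuspMap F)) n := by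
  have hn' : (0 : ℝ) < n := by exact_mod_cast hn
  have hγT := hF.pos T (by linarith)
  have hγ2 := hF.pos (2 * T) (by linarith)
  have hγs := hF.small T (by linarith)
  have hγ2s := hF.small (2 * T) (by linarith)
  have hγa : γ (2 * T) ≤ γ T := hF.anti (show -1 < T by linarith) (show -1 < 2 * T by linarith)
    (by linarith)
  set M := Real.log (200 * T) with hM
  have hM1 : 1 ≤ M := by
    rw [hM, Real.le_log_iff_exp_le (by linarith)]
    linarith [Real.exp_one_lt_d9]
  set ε := Real.exp (-M) with hεd
  have hεv : ε = 1 / (200 * T) := by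
    rw [hεd, Real.exp_neg, hM, Real.exp_log (by linarith), one_div]
  have hε : 0 < ε := Real.exp_pos _
  have hnT' : (n : ℝ) ≤ T := by nlinarith
  have hnε : n * ε ≤ 1 / 200 := by
    rw [hεv, mul_one_div, div_le_div_iff₀ (by linarith) (by norm_num)]
    linarith
  set l := T / n with hl
  have hl0 : 0 < l := by positivity
  have hnl : n * l = T := by rw [hl]; field_simp
  have hlM : M ≤ 3 / 4 * γ (2 * T) * l := by
    have : n * M ≤ n * (3 / 4 * γ (2 * T) * l) := by
      calc n * M ≤ 3 / 4 * γ (2 * T) * T := hnT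
        _ = n * (3 / 4 * γ (2 * T) * l) := by rw [← hnl]; ring
    exact le_of_mul_le_mul_left this hn'
  set t : Fin n → ℝ := fun k => T + ((k : ℕ) + 1 / 2 : ℝ) * l with ht
  set q := 1 / (40 * γ T) with hq
  have hq0 : 0 < q := by positivity
  have hql : q ≤ l / 4 := by
    rw [hq, div_le_iff₀ (by positivity)]
    nlinarith
  have htlo : ∀ k, T + l / 2 ≤ t k := by
    intro k
    have : (0 : ℝ) ≤ ((k : ℕ) : ℝ) := Nat.cast_nonneg _
    simp only [ht]
    nlinarith
  have hthi : ∀ k, t k + l / 2 ≤ 2 * T := by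
    intro k
    have h1 : ((k : ℕ) : ℝ) + 1 ≤ n := by exact_mod_cast k.2
    simp only [ht]
    nlinarith
  have htt : ∀ i j : Fin n, i < j → t i + l ≤ t j := by
    intro i j hij
    have h1 : ((i : ℕ) : ℝ) + 1 ≤ (j : ℕ) := by exact_mod_cast hij
    simp only [ht]
    nlinarith
  set ρ : Fin n → ℝ := fun k => Real.exp (-(F (t k)).re) with hρ
  have h0 : ∀ k, 0 < ρ k := fun k => Real.exp_pos _
  have h1 : ∀ k, ρ k ≤ 1 / 2 := by
    intro k
    have h2 := hF.real_mono (t := T) (t' := t k) (T := t k) (by linarith) (by linarith [htlo k])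
      le_rfl
    have h3 := hF.pos (t k) (by linarith [htlo k])
    have h4 : 1 ≤ (F (t k)).re := by nlinarith [htlo k]
    have h5 : ρ k ≤ Real.exp (-1) := Real.exp_le_exp.2 (by linarith)
    linarith [Real.exp_neg_one_lt_d9]
  have hlt : ∀ i j : Fin n, i < j → ρ j ≤ ε * ρ i := by
    intro i j hij
    have h2 := hF.real_mono (t := t i) (t' := t j) (T := 2 * T) (by linarith [htlo i])
      (by linarith [htt i j hij]) (by linarith [hthi j])
    have h3 : 3 / 4 * γ (2 * T) * l ≤ 3 / 4 * γ (2 * T) * (t j - t i) := by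
      gcongr
      linarith [htt i j hij]
    simp only [hρ, hεd]
    rw [← Real.exp_add]
    apply Real.exp_le_exp.2
    linarith
  have hsep : ∀ i j, i ≠ j → ρ i ≤ ε * ρ j ∨ ρ j ≤ ε * ρ i := by
    intro i j hij
    rcases lt_or_gt_of_ne hij with h | h
    · exact Or.inr (hlt i j h)
    · exact Or.inl (hlt j i h)
  refine approx_lower (fun i => kel (1 - ρ i) (one_sub_abs_lt (h0 i) (h1 i)) 1) two_pos
    (gram_bound h0 h1 hε.le hsep (by linarith)) fun α => ?_
  set f : dStar := ∑ i, α i • kel (1 - ρ i) (one_sub_abs_lt (h0 i) (h1 i)) 1 with hf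
  have hfm := mem_dStar.1 f.2
  rw [hF.eDNormSq_comp hfm.2.2, hF.dirE_comp hfm.1]
  -- disjoint boxes on which a single term dominates
  set E : Fin n → Set ℂ := fun k => Icc (t k - q) (t k + q) ×ℂ Icc (-1) 1 with hE
  have hEm : ∀ k, MeasurableSet (E k) := fun k => (isClosed_Icc.reProdIm isClosed_Icc).measurableSet
  have hEre : ∀ k, ∀ s ∈ E k, T ≤ s.re ∧ s.re ≤ 2 * T ∧ |s.re - t k| ≤ q ∧ |s.im| ≤ 1 := by
    intro k s hs
    obtain ⟨⟨ha, hb⟩, hc⟩ := hs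
    change t k - q ≤ s.re at ha
    change s.re ≤ t k + q at hb
    refine ⟨by linarith [htlo k], by linarith [hthi k], ?_, abs_le.2 hc⟩
    rw [abs_le]
    constructor <;> linarith
  have hEd : ⋃ k, E k ⊆ dom := by
    refine iUnion_subset fun k s hs => ?_
    obtain ⟨ha, -, -, hd⟩ := hEre k s hs
    exact mem_dom (by linarith) hd
  have hdisj : Pairwise (Function.onFun Disjoint E) := by
    intro i j hij
    refine Set.disjoint_left.2 fun s hi hj => ?_
    have a1 := abs_le.1 (hEre i s hi).2.2.1
    have a2 := abs_le.1 (hEre j s hj).2.2.1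
    rcases lt_or_gt_of_ne hij with h | h
    · linarith [htt i j h]
    · linarith [htt j i h]
  set S := ∑ i, ‖α i‖ ^ 2 with hS
  set c : Fin n → ℝ := fun k => 2 / 5 * γ (2 * T) ^ 2 * (‖α k‖ ^ 2 / 50 - 169 * ε ^ 2 * n * S)
    with hc
  have hpoint : ∀ k, ∀ s ∈ E k, ENNReal.ofReal (c k) ≤ ENNReal.ofReal
      (‖deriv (f : ℂ → ℂ) (psi (F s))‖ ^ 2 * (Real.exp (-(F s).re) * ‖deriv F s‖) ^ 2) := by
    intro k s hs
    obtain ⟨ha, hb, hc1, hd⟩ := hEre k s hs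
    have hsd : s ∈ dom := hEd (mem_iUnion.2 ⟨k, hs⟩)
    have hss := dom_subset_strip hsd
    have htk : -1 < t k := by linarith [htlo k]
    set δ : ℂ := F s - F (t k) with hδd
    have hδ : ‖δ‖ ≤ 1 / 16 := by
      have b1 := hF.lip (τ := T) (by linarith) hss (ofReal_mem_strip htk) ha
        (by simpa using (by linarith [htlo k] : T ≤ t k))
      have b2 : ‖s - t k‖ ≤ q + 1 := by
        have := norm_le_abs_re_add_abs_im (s - t k)
        rw [sub_re, sub_im, ofReal_re, ofReal_im, sub_zero] at this
        linarith
      have b3 : 5 / 4 * γ T * ‖s - t k‖ ≤ 5 / 4 * γ T * (q + 1) := by gcongr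
      have b4 : γ T * q = 1 / 40 := by
        rw [hq]
        field_simp
      nlinarith
    have hFt : F (t k) = ((F (t k)).re : ℂ) := by
      apply Complex.ext
      · simp
      · simpa using hF.real _ htk
    have hw : 1 - psi (F s) = ρ k * exp (-δ) := by
      have : -F s = ((-(F (t k)).re : ℝ) : ℂ) + -δ := by
        rw [hδd]
        push_cast
        rw [← hFt]
        ring
      rw [psi, sub_sub_cancel, this, exp_add, hρ, ofReal_exp]
    have hp := point_lower h0 h1 hε.le hsep α k hδ hw
    rw [← kel_sum_deriv (fun i => one_sub_abs_lt (h0 i) (h1 i)) α (hF.psi_F_mem hsd)] at hp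
    have hρs : 7 / 8 * ρ k ≤ Real.exp (-(F s).re) := by
      rw [← norm_one_sub_psi, hw, norm_mul, Complex.norm_real, Real.norm_of_nonneg (h0 k).le,
        mul_comm]
      gcongr
      have := norm_exp_sub_one_le (x := -δ) (by rw [norm_neg]; linarith)
      rw [norm_neg] at this
      have h4 := norm_le_norm_add_norm_sub' 1 (exp (-δ))
      rw [norm_one, norm_sub_rev] at h4
      linarith
    have hF' : 3 / 4 * γ (2 * T) ≤ ‖deriv F s‖ := by
      have := hF.anti (show -1 < s.re from hss.1) (show -1 < 2 * T by linarith) hb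
      linarith [hF.le_deriv hss]
    exact ENNReal.ofReal_le_ofReal (box_aux (h0 k) hγ2.le hp hρs hF')
  have hmeas : ∀ k, ENNReal.ofReal q ≤ nA (E k) := by
    intro k
    rw [nA, Measure.smul_apply, smul_eq_mul, hE]
    simp only
    rw [volume_box, ← ENNReal.ofReal_inv_of_pos Real.pi_pos, ← ENNReal.ofReal_mul' (by norm_num),
      ← ENNReal.ofReal_mul (by positivity)]
    apply ENNReal.ofReal_le_ofReal
    rw [inv_mul_eq_div, le_div_iff₀ Real.pi_pos]
    nlinarith [Real.pi_lt_d2]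
  calc ENNReal.ofReal (γ (2 * T) ^ 2 / (10000 * γ T) * S)
      ≤ ENNReal.ofReal (∑ k, c k * q) := by
        apply ENNReal.ofReal_le_ofReal
        rw [← Finset.sum_mul]
        simp only [hc]
        rw [← Finset.mul_sum, Finset.sum_sub_distrib, ← Finset.sum_div, ← hS, Finset.sum_const,
          Finset.card_univ, Fintype.card_fin, nsmul_eq_mul]
        have hS0 : 0 ≤ S := by positivity
        have e1 : γ (2 * T) ^ 2 / (10000 * γ T) * S = γ (2 * T) ^ 2 * q * (S / 250) := by
          rw [hq]
          field_simp
          ring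
        have e2 : (n * (169 * ε ^ 2 * n * S)) ≤ 169 * (1 / 200) ^ 2 * S := by
          have : (n * ε) ^ 2 ≤ (1 / 200) ^ 2 := by gcongr
          calc (n * (169 * ε ^ 2 * n * S)) = 169 * (n * ε) ^ 2 * S := by ring
            _ ≤ _ := by gcongr
        rw [e1]
        have e3 : S / 250 ≤ 2 / 5 * (S / 50 - n * (169 * ε ^ 2 * n * S)) := by linarith
        calc γ (2 * T) ^ 2 * q * (S / 250)
            ≤ γ (2 * T) ^ 2 * q * (2 / 5 * (S / 50 - n * (169 * ε ^ 2 * n * S))) := by gcongr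
          _ = _ := by ring
    _ ≤ ∑ k, ENNReal.ofReal (c k * q) := ofReal_sum_le _
    _ ≤ ∑ k, ∫⁻ s in E k, ENNReal.ofReal (‖deriv (f : ℂ → ℂ) (psi (F s))‖ ^ 2 *
          (Real.exp (-(F s).re) * ‖deriv F s‖) ^ 2) ∂nA := by
        refine Finset.sum_le_sum fun k _ => ?_
        rw [ENNReal.ofReal_mul' hq0.le]
        refine le_trans ?_ (setLIntegral_mono' (hEm k) (hpoint k))
        rw [setLIntegral_const]
        gcongr
        exact hmeas k
    _ = ∫⁻ s in ⋃ k, E k, ENNReal.ofReal (‖deriv (f : ℂ → ℂ) (psi (F s))‖ ^ 2 *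
          (Real.exp (-(F s).re) * ‖deriv F s‖) ^ 2) ∂nA := by
        rw [lintegral_iUnion hEm hdisj, tsum_fintype]
    _ ≤ _ := lintegral_mono_set hEd

end CuspExp

/-! ### The exponents `s ^ a * (log s) ^ c` -/

/-- The function `s ^ a * (log s) ^ c`, whose translates serve as cusp exponents. -/
def powLog (a : ℝ) (c : ℤ) (s : ℂ) : ℂ := exp (a * log s) * log s ^ c

/-- The leading term `a * t ^ (a - 1) * (log t) ^ c` of the derivative of `powLog a c`. -/
def powLogRate (a : ℝ) (c : ℤ) (t : ℝ) : ℝ :=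
  a * (Real.exp (-(1 - a) * Real.log t) * Real.log t ^ c)

lemma powLog_measurable (a : ℝ) (c : ℤ) : Measurable (powLog a c) := by
  unfold powLog
  have h : Measurable fun s : ℂ => log s ^ c := Measurable.pow_const measurable_log c
  exact (measurable_exp.comp (measurable_log.const_mul _)).mul h

lemma log_ne_zero_of_re {s : ℂ} (hs : 1 < s.re) : log s ≠ 0 := by
  intro h
  have h1 : (log s).re = 0 := by rw [h, zero_re]
  rw [log_re] at h1
  have : 0 < Real.log ‖s‖ := Real.log_pos (hs.trans_le (re_le_norm s))
  linarith

lemma powLog_hasDerivAt (a : ℝ) (c : ℤ) {s : ℂ} (hs : 1 < s.re) :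
    HasDerivAt (powLog a c) (exp ((a - 1) * log s) * log s ^ c * (a + c / log s)) s := by
  have h0 := log_ne_zero_of_re hs
  have hs0 : s ≠ 0 := by
    rintro rfl
    simp at hs
    linarith
  have h1 : HasDerivAt log s⁻¹ s := hasDerivAt_log (Or.inl (by linarith))
  have h2 := ((h1.const_mul (a : ℂ)).cexp).mul ((hasDerivAt_zpow c (log s) (Or.inl h0)).comp s h1)
  refine h2.congr_deriv ?_
  have e : exp ((a - 1) * log s) = exp (a * log s) * s⁻¹ := by
    rw [sub_mul, one_mul, exp_sub, exp_log hs0, div_eq_mul_inv]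
  simp only [Function.comp]
  rw [e, zpow_sub_one₀ h0]
  field_simp

lemma powLog_ofReal (a : ℝ) (c : ℤ) {t : ℝ} (ht : 0 ≤ t) :
    powLog a c t = ((Real.exp (a * Real.log t) * Real.log t ^ c : ℝ) : ℂ) := by
  rw [powLog, ← ofReal_log ht]
  push_cast
  rfl

/-- `powLog a c` has derivative asymptotic to its leading term, evaluated at the real part, in
a horizontal strip. -/
lemma powLog_ratio {a : ℝ} (ha : 0 < a) (c : ℤ) :
    ∃ B : ℝ, 1 < B ∧ ∀ s : ℂ, B ≤ s.re → |s.im| ≤ 2 →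
      ‖deriv (powLog a c) s - powLogRate a c s.re‖ ≤ powLogRate a c s.re / 4 := by
  set l : Filter ℂ := comap re atTop ⊓ 𝓟 {s | |s.im| ≤ 2} with hl
  have hre : Tendsto re l atTop := tendsto_comap.mono_left inf_le_left
  have him : ∀ᶠ s in l, |s.im| ≤ 2 :=
    (eventually_principal.2 fun _ h => h).filter_mono inf_le_right
  -- `u = log (s / re s)` tends to `0`
  set u : ℂ → ℂ := fun s => log (1 + ((s.im / s.re : ℝ) : ℂ) * I) with hu
  have hq : Tendsto (fun s : ℂ => s.im / s.re) l (𝓝 0) := by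
    have h2 : Tendsto (fun s : ℂ => 2 / s.re) l (𝓝 0) := hre.const_div_atTop 2
    refine squeeze_zero_norm' ?_ h2
    filter_upwards [him, hre.eventually_gt_atTop 0] with s h1 h2
    rw [norm_div, Real.norm_eq_abs, Real.norm_of_nonneg h2.le]
    gcongr
  have hut : Tendsto u l (𝓝 0) := by
    have h1 : Tendsto (fun s : ℂ => 1 + ((s.im / s.re : ℝ) : ℂ) * I) l (𝓝 1) := by
      have := ((continuous_ofReal.tendsto 0).comp hq).mul_const I |>.const_add (1 : ℂ)
      simpa using this
    have h2 := (continuousAt_clog (x := 1) (Or.inl (by norm_num))).tendsto.comp h1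
    rwa [log_one] at h2
  have hL : Tendsto (fun s : ℂ => Real.log s.re) l atTop := Real.tendsto_log_atTop.comp hre
  have hLi : Tendsto (fun s : ℂ => ((Real.log s.re : ℝ) : ℂ)⁻¹) l (𝓝 0) := by
    have := (continuous_ofReal.tendsto 0).comp (tendsto_inv_atTop_zero.comp hL)
    simpa [Function.comp_def] using this
  have hlog : ∀ᶠ s in l, log s = Real.log s.re + u s := by
    filter_upwards [hre.eventually_gt_atTop 0] with s hs
    rw [hu]
    simp only
    rw [← log_ofReal_mul hs]
    · congr 1
      apply Complex.ext
      · simp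
      · simp
        field_simp
    · intro h
      have := congrArg re h
      simp at this
  have hr : Tendsto (fun s : ℂ => 1 + u s * ((Real.log s.re : ℝ) : ℂ)⁻¹) l (𝓝 1) := by
    simpa using (hut.mul hLi).const_add (1 : ℂ)
  have hmain : Tendsto (fun s : ℂ => exp ((a - 1) * u s) *
      (1 + u s * ((Real.log s.re : ℝ) : ℂ)⁻¹) ^ c *
      (1 + c / a * ((Real.log s.re : ℝ) : ℂ)⁻¹ * (1 + u s * ((Real.log s.re : ℝ) : ℂ)⁻¹)⁻¹))
      l (𝓝 1) := by
    have h1 : Tendsto (fun s : ℂ => exp ((a - 1) * u s)) l (𝓝 1) := by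
      have := (continuous_exp.tendsto _).comp (hut.const_mul ((a : ℂ) - 1))
      simpa [Function.comp_def] using this
    have h2 := hr.zpow₀ c (Or.inl one_ne_zero)
    have h3 := ((hLi.const_mul ((c : ℂ) / a)).mul (hr.inv₀ one_ne_zero)).const_add (1 : ℂ)
    simpa using (h1.mul h2).mul h3
  have hev : ∀ᶠ s in l, ‖deriv (powLog a c) s - powLogRate a c s.re‖ ≤
      powLogRate a c s.re / 4 := by
    filter_upwards [hlog, hre.eventually_gt_atTop 1, hL.eventually_gt_atTop 0,
      hr.eventually_ne one_ne_zero,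
      hmain.eventually (Metric.closedBall_mem_nhds (1 : ℂ) (by norm_num : (0 : ℝ) < 1 / 4))]
      with s h1 h2 h3 h4 h5
    rw [dist_eq_norm] at h5
    have hg : 0 < powLogRate a c s.re := by unfold powLogRate; positivity
    have ha' : (a : ℂ) ≠ 0 := by exact_mod_cast ha.ne'
    have hL' : ((Real.log s.re : ℝ) : ℂ) ≠ 0 := by exact_mod_cast h3.ne'
    have e : deriv (powLog a c) s = (powLogRate a c s.re : ℂ) * (exp ((a - 1) * u s) *
      (1 + u s * ((Real.log s.re : ℝ) : ℂ)⁻¹) ^ c *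
      (1 + c / a * ((Real.log s.re : ℝ) : ℂ)⁻¹ * (1 + u s * ((Real.log s.re : ℝ) : ℂ)⁻¹)⁻¹)) := by
      rw [(powLog_hasDerivAt a c h2).deriv]
      have e1 : log s = ((Real.log s.re : ℝ) : ℂ) * (1 + u s * ((Real.log s.re : ℝ) : ℂ)⁻¹) := by
        rw [h1]
        field_simp
      have e2 : exp ((a - 1) * log s) =
          exp (-(1 - a) * ((Real.log s.re : ℝ) : ℂ)) * exp ((a - 1) * u s) := by
        rw [← exp_add, h1]
        congr 1
        ring
      rw [e2, e1, mul_zpow, powLogRate, ofReal_mul, ofReal_mul, ofReal_exp, ofReal_mul, ofReal_neg,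
        ofReal_sub, ofReal_one, ofReal_zpow]
      generalize 1 + u s * ((Real.log s.re : ℝ) : ℂ)⁻¹ = R at h4
      field_simp
    rw [e, ← mul_sub_one, norm_mul, Complex.norm_real, Real.norm_of_nonneg hg.le]
    calc _ ≤ powLogRate a c s.re * (1 / 4) := by gcongr
      _ = _ := by ring
  rw [hl, eventually_inf_principal, eventually_comap] at hev
  obtain ⟨B, hB⟩ := eventually_atTop.1 hev
  exact ⟨max B 2, by simp, fun s h1 h2 => hB s.re ((le_max_left _ _).trans h1) s rfl h2⟩

/-- Translates of `powLog a c` by a large constant are cusp exponents. -/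
lemma exists_cuspExp {a : ℝ} (ha : 0 < a) (ha1 : a < 1) (c : ℤ) :
    ∃ A : ℝ, 1 < A ∧ CuspExp (fun s => powLog a c (A + s) - powLog a c A)
      (fun t => powLogRate a c (A + t)) := by
  have hb : 0 < 1 - a := by linarith
  obtain ⟨B, hB1, hB⟩ := powLog_ratio ha c
  -- in the logarithmic variable the rate is eventually decreasing, with limit `0`
  have hlim : Tendsto (fun L : ℝ => a * (Real.exp (-(1 - a) * L) * L ^ c)) atTop (𝓝 0) := by
    have := (tendsto_rpow_mul_exp_neg_mul_atTop_nhds_zero c (1 - a) hb).const_mul a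
    simpa [Real.rpow_intCast, mul_comm] using this
  obtain ⟨L₁, hL₁⟩ := eventually_atTop.1 (hlim.eventually (ge_mem_nhds (by norm_num :
    (0 : ℝ) < 1 / 100)))
  set L₀ := max (max L₁ (c / (1 - a))) 1 with hL₀
  have hanti : AntitoneOn (fun L : ℝ => Real.exp (-(1 - a) * L) * L ^ c) (Ici L₀) := by
    have hd : ∀ L : ℝ, 0 < L → HasDerivAt (fun L : ℝ => Real.exp (-(1 - a) * L) * L ^ c)
        (Real.exp (-(1 - a) * L) * L ^ (c - 1) * (c - (1 - a) * L)) L := by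
      intro L hL
      have h1 := (((hasDerivAt_id L).const_mul (-(1 - a))).exp).mul
        (hasDerivAt_zpow c L (Or.inl hL.ne'))
      refine h1.congr_deriv ?_
      simp only [id]
      rw [zpow_sub_one₀ hL.ne']
      field_simp
      ring
    have hpos : ∀ L ∈ Ici L₀, 0 < L := fun L hL =>
      lt_of_lt_of_le one_pos ((le_max_right _ _).trans hL)
    refine antitoneOn_of_deriv_nonpos (convex_Ici _)
      (fun L hL => (hd L (hpos L hL)).continuousAt.continuousWithinAt)
      (fun L hL => (hd L (hpos L (interior_subset hL))).differentiableAt.differentiableWithinAt)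
      fun L hL => ?_
    have hL' := interior_subset hL
    have hLp := hpos L hL'
    rw [(hd L hLp).deriv]
    refine mul_nonpos_of_nonneg_of_nonpos (by positivity) ?_
    have : c / (1 - a) ≤ L := ((le_max_right _ _).trans (le_max_left _ _)).trans hL'
    rw [div_le_iff₀ hb] at this
    linarith
  set A := max B (Real.exp L₀) + 1 with hA
  have hAB : B ≤ A - 1 := by rw [hA, add_sub_cancel_right]; exact le_max_left _ _
  have hAL : Real.exp L₀ ≤ A - 1 := by rw [hA, add_sub_cancel_right]; exact le_max_right _ _
  have hlog : ∀ t : ℝ, -1 < t → L₀ ≤ Real.log (A + t) := by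
    intro t ht
    rw [Real.le_log_iff_exp_le (by linarith)]
    linarith
  have hA1 : 1 < A := by linarith
  have hder : ∀ s ∈ strip, HasDerivAt (fun s => powLog a c (A + s) - powLog a c A)
      (deriv (powLog a c) (A + s)) s := by
    intro s hs
    have h1 : 1 < ((A : ℂ) + s).re := by
      rw [add_re, ofReal_re]
      linarith [hs.1]
    exact ((powLog_hasDerivAt a c h1).differentiableAt.hasDerivAt.comp_const_add (A : ℂ) s).sub_const _
  refine ⟨A, hA1, ?_, ?_, ?_, ?_, ?_, ?_, ?_, ?_⟩
  · exact ((powLog_measurable a c).comp (measurable_const_add _)).sub_const _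
  · exact fun s hs => (hder s hs).differentiableAt.differentiableWithinAt
  · simp
  · intro t ht
    have h1 : ((A : ℂ) + t) = ((A + t : ℝ) : ℂ) := by push_cast; rfl
    rw [h1, powLog_ofReal a c (by linarith), powLog_ofReal a c (by linarith), ← ofReal_sub, ofReal_im]
  · intro t ht
    have : 0 < Real.log (A + t) :=
      lt_of_lt_of_le one_pos ((le_max_right _ _).trans (hlog t ht))
    unfold powLogRate
    positivity
  · intro t ht t' ht' htt
    refine mul_le_mul_of_nonneg_left (hanti (hlog t ht) (hlog t' ht') ?_) ha.le
    have : -1 < t := ht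
    exact Real.log_le_log (by linarith) (by linarith)
  · intro t ht
    exact hL₁ _ (((le_max_left _ _).trans (le_max_left _ _)).trans (hlog t ht))
  · intro s hs
    rw [(hder s hs).deriv]
    have h1 := hB (A + s) (by rw [add_re, ofReal_re]; linarith [hs.1])
      (by rw [add_im, ofReal_im, zero_add]; exact hs.2.le)
    simpa using h1

/-! ### Two-sided estimates along a sequence -/

/-- `j ^ c * exp (θ j)`, in which all the estimates are expressed. -/
def pexp (c θ : ℝ) (j : ℕ) : ℝ := (j : ℝ) ^ c * Real.exp (θ * j)

lemma pexp_pos (c θ : ℝ) {j : ℕ} (hj : 0 < j) : 0 < pexp c θ j := by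
  have : (0 : ℝ) < j := by exact_mod_cast hj
  unfold pexp
  positivity

lemma pexp_mul (c θ c' θ' : ℝ) {j : ℕ} (hj : 0 < j) :
    pexp c θ j * pexp c' θ' j = pexp (c + c') (θ + θ') j := by
  have : (0 : ℝ) < j := by exact_mod_cast hj
  rw [pexp, pexp, pexp, Real.rpow_add this, add_mul, Real.exp_add]
  ring

lemma pexp_rpow (c θ q : ℝ) {j : ℕ} (hj : 0 < j) :
    pexp c θ j ^ q = pexp (c * q) (θ * q) j := by
  have : (0 : ℝ) < j := by exact_mod_cast hj
  rw [pexp, pexp, Real.mul_rpow (by positivity) (by positivity), ← Real.rpow_mul this.le,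
    ← Real.exp_mul]
  ring_nf

lemma pexp_tendsto_zero (c : ℝ) {θ : ℝ} (hθ : θ < 0) : Tendsto (pexp c θ) atTop (𝓝 0) := by
  have := (tendsto_rpow_mul_exp_neg_mul_atTop_nhds_zero c (-θ) (by linarith)).comp
    (tendsto_natCast_atTop_atTop (R := ℝ))
  refine this.congr fun j => ?_
  simp [pexp]

lemma pexp_neg (c θ : ℝ) {j : ℕ} (hj : 0 < j) : pexp (-c) (-θ) j = (pexp c θ j)⁻¹ := by
  refine eq_inv_of_mul_eq_one_left ?_
  rw [pexp_mul _ _ _ _ hj]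
  simp [pexp]

lemma pexp_tendsto_atTop (c : ℝ) {θ : ℝ} (hθ : 0 < θ) : Tendsto (pexp c θ) atTop atTop := by
  have h := pexp_tendsto_zero (-c) (θ := -θ) (by linarith)
  have h2 : Tendsto (pexp (-c) (-θ)) atTop (𝓝[>] 0) := by
    refine tendsto_nhdsWithin_iff.2 ⟨h, ?_⟩
    filter_upwards [eventually_gt_atTop 0] with j hj
    exact pexp_pos _ _ hj
  refine h2.inv_tendsto_nhdsGT_zero.congr' ?_
  filter_upwards [eventually_gt_atTop 0] with j hj
  rw [Pi.inv_apply, pexp_neg _ _ hj, inv_inv]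

lemma pexp_summable (c : ℝ) {θ : ℝ} (hθ : θ < 0) : Summable (pexp c θ) := by
  obtain ⟨k, hk⟩ := exists_nat_ge c
  refine Summable.of_norm_bounded_eventually_nat
    (Real.summable_pow_mul_exp_neg_nat_mul k (r := -θ) (by linarith)) ?_
  filter_upwards [eventually_ge_atTop 1] with j hj
  have h1 : (1 : ℝ) ≤ j := by exact_mod_cast hj
  rw [Real.norm_of_nonneg (pexp_pos _ _ hj).le, pexp, neg_neg]
  gcongr
  rw [← Real.rpow_natCast]
  exact Real.rpow_le_rpow_of_exponent_le h1 hk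

/-- Replacing `j` by `j + 1` changes `pexp` by a bounded factor. -/
lemma pexp_succ (c θ : ℝ) : ∃ k : ℝ, 0 < k ∧ ∀ j : ℕ, 0 < j → k * pexp c θ j ≤ pexp c θ (j + 1) := by
  refine ⟨min 1 (2 ^ c) * Real.exp θ, by positivity, fun j hj => ?_⟩
  have h1 : (1 : ℝ) ≤ j := by exact_mod_cast hj
  have h2 : min 1 (2 ^ c) * (j : ℝ) ^ c ≤ ((j + 1 : ℕ) : ℝ) ^ c := by
    push_cast
    rcases le_total 0 c with h | h
    · calc min 1 (2 ^ c) * (j : ℝ) ^ c ≤ 1 * (j : ℝ) ^ c := by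
            gcongr
            exact min_le_left _ _
        _ ≤ _ := by
            rw [one_mul]
            gcongr
            linarith
    · calc min 1 (2 ^ c) * (j : ℝ) ^ c ≤ 2 ^ c * (j : ℝ) ^ c := by
            gcongr
            exact min_le_right _ _
        _ = (2 * j : ℝ) ^ c := by rw [Real.mul_rpow (by norm_num) (by linarith)]
        _ ≤ _ := Real.rpow_le_rpow_of_nonpos (by linarith) (by linarith) h
  rw [pexp, pexp]
  calc _ = (min 1 (2 ^ c) * (j : ℝ) ^ c) * Real.exp (θ * (j + 1 : ℕ)) := by
        push_cast
        rw [mul_add, Real.exp_add, mul_one]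
        ring
    _ ≤ _ := by gcongr

lemma pexp_succ_le (c θ : ℝ) :
    ∃ K : ℝ, 0 < K ∧ ∀ j : ℕ, 0 < j → pexp c θ (j + 1) ≤ K * pexp c θ j := by
  obtain ⟨k, hk, h⟩ := pexp_succ (-c) (-θ)
  refine ⟨k⁻¹, by positivity, fun j hj => ?_⟩
  have h1 := h j hj
  rw [pexp_neg _ _ hj, pexp_neg _ _ j.succ_pos, ← div_eq_mul_inv, ← one_div,
    div_le_div_iff₀ (pexp_pos _ _ hj) (pexp_pos _ _ j.succ_pos)] at h1
  rw [inv_mul_eq_div, le_div_iff₀ hk]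
  linarith

lemma powLogRate_exp (a : ℝ) (c : ℤ) (j : ℕ) :
    powLogRate a c (Real.exp j) = a * pexp c (a - 1) j := by
  rw [powLogRate, Real.log_exp, pexp, Real.rpow_intCast, neg_sub]
  ring

lemma powLog_exp (a : ℝ) (c : ℤ) (j : ℕ) :
    powLog a c (Real.exp j : ℝ) = ((pexp c a j : ℝ) : ℂ) := by
  rw [powLog_ofReal _ _ (Real.exp_pos _).le, Real.log_exp, pexp, Real.rpow_intCast, mul_comm]

lemma exp_tendsto_atTop : Tendsto (fun j : ℕ => Real.exp j) atTop atTop :=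
  Real.tendsto_exp_atTop.comp tendsto_natCast_atTop_atTop

/-- The composition operator `C_φ` with cusp exponent `s ^ a * (log s) ^ c`. Up to constants, its
approximation numbers `a_n` are at least the square root of `e ^ ((a - 1) j) * j ^ c` for `n` up to
the order of `e ^ (a j) * j ^ (c - 1)`, and at most that from the order of
`e ^ (a j) * j ^ (c + 1)` on. -/
lemma exists_map {a : ℝ} (ha : 0 < a) (ha1 : a < 1) (c : ℤ) :
    ∃ φ : ℂ → ℂ, IsSchur φ ∧ φ 0 = 0 ∧ IsBoundedOpOn MemDStar eDNormSq (compOp φ) ∧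
      eApproxNum MemDStar eDNormSq (compOp φ) 1 ≤ 1 ∧
      (∃ K : ℝ, 0 < K ∧ ∀ᶠ j : ℕ in atTop, ∃ d : ℕ, j ≤ d ∧ (d : ℝ) ≤ K * pexp (c + 1) a j ∧
        eApproxNum MemDStar eDNormSq (compOp φ) (d + 1) ≤
          ENNReal.ofReal (Real.sqrt (K * pexp c (a - 1) j))) ∧
      (∃ k : ℝ, 0 < k ∧ ∀ᶠ j : ℕ in atTop, ∃ n : ℕ, 0 < n ∧ k * pexp (c - 1) a j ≤ n ∧
        ENNReal.ofReal (Real.sqrt (k * pexp c (a - 1) j)) ≤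
          eApproxNum MemDStar eDNormSq (compOp φ) n) := by
  obtain ⟨A, hA, hF⟩ := exists_cuspExp ha ha1 c
  set F : ℂ → ℂ := fun s => powLog a c (A + s) - powLog a c A with hFd
  set γ : ℝ → ℝ := fun t => powLogRate a c (A + t) with hγ
  set g : ℝ := Real.exp (a * Real.log A) * Real.log A ^ c with hg
  have hlogA := Real.log_pos hA
  have hg0 : 0 < g := by positivity
  have hFT : ∀ j : ℕ, (F ((Real.exp j - A : ℝ) : ℂ)).re = pexp c a j - g := by
    intro j
    rw [hFd]
    simp only
    rw [← ofReal_add, add_sub_cancel, powLog_exp, powLog_ofReal _ _ (by linarith), ← ofReal_sub,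
      ofReal_re]
  have hγT : ∀ j : ℕ, γ (Real.exp j - A) = a * pexp c (a - 1) j := by
    intro j
    rw [hγ]
    simp only
    rw [add_sub_cancel, powLogRate_exp]
  have hbig : ∀ C : ℝ, ∀ᶠ j : ℕ in atTop, C ≤ Real.exp j := fun C =>
    exp_tendsto_atTop.eventually_ge_atTop C
  refine ⟨cuspMap F, hF.cuspMap_isSchur, hF.cuspMap_zero, hF.isBounded, hF.approx_one_le, ?_, ?_⟩
  · refine ⟨102 + 68, by norm_num, ?_⟩
    filter_upwards [eventually_gt_atTop 0, hbig A, (pexp_tendsto_atTop c ha).eventually_ge_atTop 1]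
      with j hj h1 h2
    have hj' : (0 : ℝ) < j := by exact_mod_cast hj
    have hN := Nat.le_ceil (16 * (pexp c a j + 1))
    have hN' := (Nat.ceil_lt_add_one (a := 16 * (pexp c a j + 1)) (by positivity)).le
    set N := ⌈16 * (pexp c a j + 1)⌉₊
    refine ⟨(N + 1) * (3 * j), ?_, ?_, ?_⟩
    · nlinarith
    · have e : pexp (c + 1) a j = j * pexp c a j := by
        rw [pexp, pexp, Real.rpow_add_one hj'.ne']
        ring
      rw [e]
      push_cast
      have : (N + 1 : ℝ) ≤ 34 * pexp c a j := by linarith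
      calc ((N : ℝ) + 1) * (3 * j) ≤ 34 * pexp c a j * (3 * j) := by gcongr
        _ = 102 * (j * pexp c a j) := by ring
        _ ≤ _ := by gcongr; norm_num
    · refine (hF.approx_le (T := Real.exp j - A) (N := N) (m := 3 * j) (by linarith) ?_).trans ?_
      · rw [hFT]
        linarith
      · apply ENNReal.ofReal_le_ofReal
        apply Real.sqrt_le_sqrt
        rw [hγT]
        have hy := pexp_pos c (a - 1) hj
        have e1 : pexp c a j * Real.exp (-j) = pexp c (a - 1) j := by
          rw [pexp, pexp, mul_assoc, ← Real.exp_add]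
          ring_nf
        have e2 : ((1 : ℝ) / 4) ^ (3 * j) ≤ Real.exp (-j) * Real.exp (-j) := by
          have : (1 : ℝ) / 64 ≤ Real.exp (-1) * Real.exp (-1) := by
            nlinarith [Real.exp_neg_one_gt_d9]
          calc ((1 : ℝ) / 4) ^ (3 * j) = (1 / 64) ^ j := by rw [pow_mul]; norm_num
            _ ≤ (Real.exp (-1) * Real.exp (-1)) ^ j := by gcongr
            _ = _ := by
              rw [mul_pow, ← Real.exp_nat_mul]
              ring_nf
        have e3 : 4 * (Real.exp j - A + 1) * (1 / 4) ^ (3 * j) ≤ 4 * pexp c (a - 1) j := by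
          calc 4 * (Real.exp j - A + 1) * (1 / 4) ^ (3 * j)
              ≤ 4 * Real.exp j * (Real.exp (-j) * Real.exp (-j)) := by gcongr; linarith
            _ = 4 * (1 * Real.exp (-j)) := by
              rw [Real.exp_neg]
              field_simp
            _ ≤ 4 * (pexp c a j * Real.exp (-j)) := by gcongr
            _ = _ := by rw [e1]
        nlinarith
  · obtain ⟨k₀, hk₀, hk⟩ := pexp_succ c (a - 1)
    set k₁ := a * k₀ with hk₁
    have hk₁0 : 0 < k₁ := by positivity
    set k₂ := 3 / 112 * k₁ with hk₂
    have hc : 0 < min (k₂) (k₁ ^ 2 / (20000 * a)) := by positivity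
    refine ⟨min (k₂) (k₁ ^ 2 / (20000 * a)), hc, ?_⟩
    filter_upwards [eventually_gt_atTop 0, hbig (2 * A), hbig 2,
      (pexp_tendsto_atTop c ha).eventually_ge_atTop (g + 1),
      (pexp_tendsto_atTop (c - 1) ha).eventually_ge_atTop (1 / k₂)] with j hj h1 h2 h3 h4
    have hj1 : (1 : ℝ) ≤ j := by exact_mod_cast hj
    have hy := pexp_pos c (a - 1) hj
    have hz := pexp_pos (c - 1) a hj
    have hTl : Real.exp j / 2 ≤ Real.exp j - A := by linarith
    have hTu : Real.exp j - A ≤ Real.exp j := by linarith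
    have hFTj := hFT j
    have hγTj := hγT j
    have hγ2 : k₁ * pexp c (a - 1) j ≤ γ (2 * (Real.exp j - A)) := by
      have h5 : γ (Real.exp (j + 1 : ℕ) - A) ≤ γ (2 * (Real.exp j - A)) := by
        have h6 : 2 * Real.exp j ≤ Real.exp (j + 1 : ℕ) := by
          push_cast
          rw [Real.exp_add, mul_comm]
          gcongr
          linarith [Real.exp_one_gt_d9]
        refine hF.anti ?_ ?_ ?_
        · exact mem_Ioi.2 (by linarith)
        · exact mem_Ioi.2 (by linarith)
        · linarith
      rw [hγT] at h5
      refine le_trans ?_ h5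
      rw [hk₁, mul_assoc]
      gcongr
      exact hk j hj
    set T := Real.exp j - A with hT
    have hT1 : 1 ≤ T := by linarith
    have hT0 : 0 < T := by linarith
    have hlog : Real.log (200 * T) ≤ 7 * j := by
      rw [Real.log_le_iff_le_exp (by linarith)]
      have e6 : (200 : ℝ) ≤ Real.exp 6 := by
        have : Real.exp 6 = Real.exp 1 ^ 6 := by rw [← Real.exp_nat_mul]; norm_num
        rw [this]
        calc (200 : ℝ) ≤ 2.7 ^ 6 := by norm_num
          _ ≤ _ := by gcongr; linarith [Real.exp_one_gt_d9]
      calc 200 * T ≤ Real.exp (6 * j) * Real.exp j := by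
            gcongr
            refine e6.trans (Real.exp_le_exp.2 ?_)
            linarith
        _ = _ := by rw [← Real.exp_add]; ring_nf
    have hlog0 : 0 < Real.log (200 * T) := Real.log_pos (by linarith)
    have hγ0 : 0 < γ (2 * T) := lt_of_lt_of_le (by positivity) hγ2
    set R := 3 / 4 * γ (2 * T) * T / Real.log (200 * T) with hR
    have hRl : 2 * k₂ * pexp (c - 1) a j ≤ R := by
      rw [hR, le_div_iff₀ hlog0]
      have e : pexp c (a - 1) j * Real.exp j = j * pexp (c - 1) a j := by
        rw [pexp, pexp, Real.rpow_sub_one (by linarith), mul_assoc, ← Real.exp_add]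
        field_simp
        ring_nf
      calc 2 * k₂ * pexp (c - 1) a j * Real.log (200 * T)
          ≤ 2 * k₂ * pexp (c - 1) a j * (7 * j) := by gcongr
        _ = 3 / 4 * (k₁ * pexp c (a - 1) j) * (Real.exp j / 2) := by
          rw [hk₂]
          linear_combination (-3 / 8 * k₁) * e
        _ ≤ _ := by gcongr
    have h5 : 1 ≤ k₂ * pexp (c - 1) a j := by
      rw [div_le_iff₀ (by positivity)] at h4
      linarith
    have hR1 : 1 ≤ R := by linarith
    have hfl := Nat.floor_le (a := R) (by linarith)
    have hfl' := Nat.lt_floor_add_one R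
    refine ⟨⌊R⌋₊, Nat.floor_pos.2 hR1, ?_, ?_⟩
    · calc min (k₂) (k₁ ^ 2 / (20000 * a)) * pexp (c - 1) a j ≤ k₂ * pexp (c - 1) a j := by
            gcongr
            exact min_le_left _ _
        _ ≤ ⌊R⌋₊ := by linarith
    · refine le_trans ?_ (hF.le_approx hT1 (by rw [hFTj]; linarith) (Nat.floor_pos.2 hR1) ?_)
      · apply ENNReal.ofReal_le_ofReal
        apply Real.sqrt_le_sqrt
        rw [hγTj]
        calc min (k₂) (k₁ ^ 2 / (20000 * a)) * pexp c (a - 1) j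
            ≤ k₁ ^ 2 / (20000 * a) * pexp c (a - 1) j := by
              gcongr
              exact min_le_right _ _
          _ = (k₁ * pexp c (a - 1) j) ^ 2 / (10000 * (a * pexp c (a - 1) j)) / 2 := by
              field_simp
              norm_num
          _ ≤ _ := by gcongr
      · rw [hR, le_div_iff₀ hlog0] at hfl
        exact hfl

/-! ### Schatten classes -/

/-- A decreasing sequence summed over the blocks `[d j, d (j + 1))`. -/
lemma tsum_blocks {b : ℕ → ℝ≥0∞} (hb : Antitone b) (hb0 : b 0 ≤ 1) {d : ℕ → ℕ} (hd : ∀ j, j ≤ d j)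
    {p : ℝ} (hp : 0 < p) (h : ∑' j, (d (j + 1) : ℝ≥0∞) * b (d j) ^ p ≠ ⊤) :
    ∑' n, b n ^ p ≠ ⊤ := by
  have hcount : ∀ (N : ℕ) (x : ℝ≥0∞), ∑' n, (if n < N then x else 0) = N * x := by
    intro N x
    rw [tsum_eq_sum (s := Finset.range N) (fun n hn => if_neg (by simpa using hn)),
      Finset.sum_congr rfl (fun n hn => if_pos (Finset.mem_range.1 hn))]
    simp
  have hpt : ∀ n, b n ^ p ≤ (if n < d 0 then 1 else 0) +
      ∑' j, if n < d (j + 1) then b (d j) ^ p else 0 := by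
    intro n
    have hex : ∃ j, n < d j := ⟨n + 1, hd (n + 1)⟩
    classical
    rcases hj : Nat.find hex with _ | j
    · have h1 : n < d 0 := hj ▸ Nat.find_spec hex
      rw [if_pos h1]
      refine le_add_right ?_
      exact ENNReal.rpow_le_one ((hb (Nat.zero_le n)).trans hb0) hp.le
    · have h1 : n < d (j + 1) := hj ▸ Nat.find_spec hex
      have h2 : d j ≤ n := not_lt.1 (Nat.find_min hex (by omega))
      refine le_add_left (le_trans ?_ (ENNReal.le_tsum j))
      rw [if_pos h1]
      exact ENNReal.rpow_le_rpow (hb h2) hp.le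
  refine ne_top_of_le_ne_top ?_ (ENNReal.tsum_le_tsum hpt)
  rw [ENNReal.tsum_add, ENNReal.tsum_comm, hcount]
  simp only [hcount]
  exact ENNReal.add_ne_top.2 ⟨by simp, h⟩

lemma le_tsum_of_antitone {b : ℕ → ℝ≥0∞} (hb : Antitone b) {p : ℝ} (hp : 0 < p) (n : ℕ) :
    n * b n ^ p ≤ ∑' m, b (m + 1) ^ p := by
  refine le_trans ?_ (ENNReal.sum_le_tsum (Finset.range n))
  calc (n : ℝ≥0∞) * b n ^ p = ∑ m ∈ Finset.range n, b n ^ p := by simp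
    _ ≤ _ := Finset.sum_le_sum fun m hm =>
      ENNReal.rpow_le_rpow (hb (Finset.mem_range.1 hm)) hp.le

lemma ofReal_sqrt_rpow {x : ℝ} (hx : 0 < x) (p : ℝ) :
    ENNReal.ofReal (Real.sqrt x) ^ p = ENNReal.ofReal (x ^ (p / 2)) := by
  rw [ENNReal.ofReal_rpow_of_pos (by positivity), Real.sqrt_eq_rpow, ← Real.rpow_mul hx.le]
  ring_nf

lemma mul_pexp_rpow {K c c' θ θ' p : ℝ} (hK : 0 < K) {j : ℕ} (hj : 0 < j) :
    K * pexp c' θ' j * (K * pexp c θ j) ^ (p / 2) =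
      K * K ^ (p / 2) * pexp (c' + c * (p / 2)) (θ' + θ * (p / 2)) j := by
  rw [Real.mul_rpow hK.le (pexp_pos _ _ hj).le, pexp_rpow _ _ _ hj, ← pexp_mul _ _ _ _ hj]
  ring

/-- The maps of `exists_map`, with membership in the Schatten class `S_p` decided by the growth
of the sequences `j ^ (c ± 1 + c p / 2) * exp ((a - (1 - a) p / 2) j)`. -/
lemma exists_schatten {a : ℝ} (ha : 0 < a) (ha1 : a < 1) (c : ℤ) :
    ∃ φ : ℂ → ℂ, IsSchur φ ∧ φ 0 = 0 ∧ ∀ p : ℝ, 0 < p →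
      (Summable (pexp (c + 1 + c * (p / 2)) (a + (a - 1) * (p / 2))) → MemSchattenD p φ) ∧
      (Tendsto (pexp (c - 1 + c * (p / 2)) (a + (a - 1) * (p / 2))) atTop atTop →
        ¬ MemSchattenD p φ) := by
  obtain ⟨φ, hφ, hφ0, hbd, hone, ⟨K, hK, hup⟩, ⟨k, hk, hlo⟩⟩ := exists_map ha ha1 c
  have hanti := approx_antitone φ
  refine ⟨φ, hφ, hφ0, fun p hp => ⟨fun hs => ⟨hbd, ?_⟩, fun ht hmem => ?_⟩⟩
  · obtain ⟨j₁, hj₁⟩ := eventually_atTop.1 hup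
    obtain ⟨K', hK', hsucc⟩ := pexp_succ_le (c + 1) a
    set j₀ := j₁ + 1
    have hj₀ : ∀ j, ∃ d : ℕ, j + j₀ ≤ d ∧ (d : ℝ) ≤ K * pexp (c + 1) a (j + j₀) ∧
        eApproxNum MemDStar eDNormSq (compOp φ) (d + 1) ≤
          ENNReal.ofReal (Real.sqrt (K * pexp c (a - 1) (j + j₀))) := fun j =>
      hj₁ _ (by omega)
    choose d hd1 hd2 hd3 using hj₀
    refine tsum_blocks (b := fun n => eApproxNum MemDStar eDNormSq (compOp φ) (n + 1)) (d := d)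
      (fun m n h => hanti (by omega)) hone (fun j => le_trans (by omega) (hd1 j)) hp ?_
    have hs' : Summable fun j => K' * (K * K ^ (p / 2) *
        pexp (c + 1 + c * (p / 2)) (a + (a - 1) * (p / 2)) (j + j₀)) :=
      (((summable_nat_add_iff j₀).2 hs).mul_left _).mul_left _
    refine ne_top_of_le_ne_top hs'.tsum_ofReal_ne_top (ENNReal.tsum_le_tsum fun j => ?_)
    have hpos : 0 < j + j₀ := by omega
    have hy := pexp_pos c (a - 1) hpos
    have hz := pexp_pos (c + 1) a hpos
    calc (d (j + 1) : ℝ≥0∞) * eApproxNum MemDStar eDNormSq (compOp φ) (d j + 1) ^ p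
        ≤ ENNReal.ofReal (K' * (K * pexp (c + 1) a (j + j₀))) *
          ENNReal.ofReal (Real.sqrt (K * pexp c (a - 1) (j + j₀))) ^ p := by
          gcongr
          · rw [← ENNReal.ofReal_natCast]
            apply ENNReal.ofReal_le_ofReal
            have h1 := hd2 (j + 1)
            have h2 := hsucc (j + j₀) hpos
            rw [add_right_comm] at h1
            calc (d (j + 1) : ℝ) ≤ K * pexp (c + 1) a (j + j₀ + 1) := h1
              _ ≤ K * (K' * pexp (c + 1) a (j + j₀)) := by gcongr
              _ = _ := by ring
          · exact hd3 j
      _ = _ := by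
          rw [ofReal_sqrt_rpow (by positivity) p, ← ENNReal.ofReal_mul (by positivity), mul_assoc,
            mul_pexp_rpow hK hpos]
  · have hS := hmem.2
    set S := ∑' n : ℕ, eApproxNum MemDStar eDNormSq (compOp φ) (n + 1) ^ p with hSd
    have hC : 0 < k * k ^ (p / 2) := by positivity
    obtain ⟨j, ⟨n, hn, hn1, hn2⟩, hj, hj2⟩ := (hlo.and ((eventually_gt_atTop 0).and
      (ht.eventually_gt_atTop (S.toReal / (k * k ^ (p / 2)))))).exists
    have hy := pexp_pos c (a - 1) hj
    have hz := pexp_pos (c - 1) a hj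
    have h1 : ENNReal.ofReal (k * k ^ (p / 2) *
        pexp (c - 1 + c * (p / 2)) (a + (a - 1) * (p / 2)) j) ≤ S := by
      refine le_trans ?_ (le_tsum_of_antitone hanti hp n)
      rw [← mul_pexp_rpow hk hj, ENNReal.ofReal_mul (by positivity),
        ← ofReal_sqrt_rpow (by positivity) p]
      gcongr
      rw [← ENNReal.ofReal_natCast]
      exact ENNReal.ofReal_le_ofReal hn1
    rw [ENNReal.ofReal_le_iff_le_toReal hS] at h1
    rw [div_lt_iff₀ hC] at hj2
    linarith

/-- With `c = 1` the critical exponent `p₁` is excluded. -/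
lemma exists_open {p₁ : ℝ} (hp₁ : 0 < p₁) :
    ∃ φ : ℂ → ℂ, IsSchur φ ∧ φ 0 = 0 ∧
      (∀ p : ℝ, p₁ < p → MemSchattenD p φ) ∧ ¬ MemSchattenD p₁ φ := by
  obtain ⟨φ, hφ, hφ0, h⟩ := exists_schatten (a := p₁ / (p₁ + 2)) (by positivity)
    ((div_lt_one (by linarith)).2 (by linarith)) 1
  refine ⟨φ, hφ, hφ0, fun p hp => (h p (by linarith)).1 (pexp_summable _ ?_), (h p₁ hp₁).2 ?_⟩
  · rw [show p₁ / (p₁ + 2) + (p₁ / (p₁ + 2) - 1) * (p / 2) = (p₁ - p) / (p₁ + 2) by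
      field_simp; ring]
    exact div_neg_of_neg_of_pos (by linarith) (by linarith)
  · rw [show p₁ / (p₁ + 2) + (p₁ / (p₁ + 2) - 1) * (p₁ / 2) = 0 by field_simp; ring]
    have := (tendsto_rpow_atTop (y := p₁ / 2) (by positivity)).comp
      (tendsto_natCast_atTop_atTop (R := ℝ))
    refine this.congr fun j => ?_
    simp [pexp]

/-- With `c = -2` the critical exponent `p₁` is included. -/
lemma exists_closed {p₁ : ℝ} (hp₁ : 0 < p₁) :
    ∃ φ : ℂ → ℂ, IsSchur φ ∧ φ 0 = 0 ∧
      MemSchattenD p₁ φ ∧ ∀ p : ℝ, 0 < p → p < p₁ → ¬ MemSchattenD p φ := by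
  obtain ⟨φ, hφ, hφ0, h⟩ := exists_schatten (a := p₁ / (p₁ + 2)) (by positivity)
    ((div_lt_one (by linarith)).2 (by linarith)) (-2)
  refine ⟨φ, hφ, hφ0, (h p₁ hp₁).1 ?_, fun p hp hpp => (h p hp).2 (pexp_tendsto_atTop _ ?_)⟩
  · rw [show p₁ / (p₁ + 2) + (p₁ / (p₁ + 2) - 1) * (p₁ / 2) = 0 by field_simp; ring]
    have := (Real.summable_nat_rpow (p := -1 - p₁)).2 (by linarith)
    refine this.congr fun j => ?_
    rw [pexp, zero_mul, Real.exp_zero, mul_one]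
    congr 1
    push_cast
    ring
  · rw [show p₁ / (p₁ + 2) + (p₁ / (p₁ + 2) - 1) * (p / 2) = (p₁ - p) / (p₁ + 2) by
      field_simp; ring]
    exact div_pos (by linarith) (by linarith)

/- STATEMENT 14 -/
theorem stmt14 (p₁ : ℝ) (hp₁ : 0 < p₁) :
    (∃ φ : ℂ → ℂ, IsSchur φ ∧ φ 0 = 0 ∧
      (∀ p : ℝ, p₁ < p → MemSchattenD p φ) ∧ ¬ MemSchattenD p₁ φ) ∧
    (∃ φ : ℂ → ℂ, IsSchur φ ∧ φ 0 = 0 ∧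
      MemSchattenD p₁ φ ∧ ∀ p : ℝ, 0 < p → p < p₁ → ¬ MemSchattenD p φ) ∧
    (∀ p₂ : ℝ, p₁ < p₂ →
      ∃ φ : ℂ → ℂ, IsSchur φ ∧ φ 0 = 0 ∧ MemSchattenD p₂ φ ∧ ¬ MemSchattenD p₁ φ) := by
  refine ⟨exists_open hp₁, exists_closed hp₁, fun p₂ hp₂ => ?_⟩
  obtain ⟨φ, hφ, hφ0, h, hn⟩ := exists_open hp₁
  exact ⟨φ, hφ, hφ0, h p₂ hp₂, hn⟩

end
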